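/- Suppose n ≥ 2 and 1 ≤ p ≤ ∞. Let φ ∈ Möb(B) and ψ = |Dφ|^{(n−2)/2}. Then the operator norm of W_{φ,ψ} on h^p(B) equals ((1+|φ(0)|)/(1−|φ(0)|))^{|(n−1)/p − (n−2)/2|} (with the convention 1/p = 0 when p = ∞). -/

import Mathlib

/-!
A Möbius self-map of the ball is either a linear isometry `A`, or `A ∘ I` where `I = invI c` is the
inversion in the sphere centred at some `c` with `|c| > 1` and orthogonal to the unit sphere
(`IsMobiusBall.exists_form`; every composition of reflections is a similarity, or an inversion
followed by a similarity, see `MobForm`). Since `I` is conformal, `|Dφ|` is the conformal factor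
`k(x) = invK c x = (|c|² - 1) / |x - c|²`, so that `W f` is the Kelvin transform
`K h = k^{(n-2)/2} · (h ∘ I)` of `h = f ∘ A`; in particular it is harmonic (`harmOn_kelvin`).

On the unit sphere, `I` distorts surface measure by `k^{n-1}` (`sph_integral_invI`, obtained from
the behaviour of Hausdorff measure under Lipschitz maps), hence for `h` continuous up to the sphere
`∫ |K h|^p dσ = ∫ k^β |h|^p dσ` with `β = (n-1) - p(n-2)/2` (`integral_kelvin`). The factor `k` takes
values between `1/b` and `b`, where `b = (|c|+1)/(|c|-1) = (1+|φ(0)|)/(1-|φ(0)|)`, and both values are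
attained, at `∓c/|c|`.

* Upper bound (`kelvin_mean_le`): `k^β ≤ b^{|β|}` on the sphere. Spherical means of `|h|^p` increase
  with the radius for harmonic `h` (`hp_mean_mono`), so boundary integrals control interior means;
  a general `f` is reached through its dilates. The monotonicity follows from subharmonicity of
  `(|h|² + ε)^{p/2}` and from the rotation invariance of `σ`: the Laplacian on the sphere is a sum of
  squares of generators of rotations, so it integrates to zero (`mean_lap`), which takes the place
  of the divergence theorem.
* Lower bound (`kelvin_lower`): for a point `ζ₀` of the sphere and a unit vector `ζ₁ ⊥ ζ₀`, the
  functions `exp (a⟨x, ζ₀ + iζ₁⟩)` are harmonic and their modulus `exp (a⟨x, ζ₀⟩)` concentrates at `ζ₀`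
  as `a → ∞` (`concentrate`). Taking for `ζ₀` the point where `k^β` is maximal shows that the bound is
  sharp for `p < ∞`. For `p = ∞` the constant function suffices.
-/

open MeasureTheory Metric Set Filter
open scoped ENNReal NNReal Topology InnerProductSpace Classical

noncomputable section

/-- Euclidean space `ℝⁿ`. -/
abbrev Eucl (n : ℕ) := EuclideanSpace ℝ (Fin n)

/-- The open unit ball `B` in `ℝⁿ`. -/
def uBall (n : ℕ) : Set (Eucl n) := Metric.ball 0 1

/-- The unit sphere `S = ∂B` in `ℝⁿ`. -/
def uSphere (n : ℕ) : Set (Eucl n) := Metric.sphere 0 1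

/-- The normalized surface area measure `σ` on the unit sphere (as a measure on `ℝⁿ`
supported on `S`), normalized so that `σ(S) = 1`. -/
def sphMeasure (n : ℕ) : Measure (Eucl n) :=
  ((Measure.hausdorffMeasure ((n : ℝ) - 1) (uSphere n))⁻¹ : ℝ≥0∞) •
    (Measure.hausdorffMeasure ((n : ℝ) - 1) : Measure (Eucl n)).restrict (uSphere n)

/-- `i`-th standard basis vector of `ℝⁿ`. -/
def basisV (n : ℕ) (i : Fin n) : Eucl n := EuclideanSpace.single i 1

/-- The Laplacian `Δf(x) = ∑ᵢ ∂²f/∂xᵢ²(x)`. -/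
def lap {n : ℕ} {F : Type*} [NormedAddCommGroup F] [NormedSpace ℝ F]
    (f : Eucl n → F) (x : Eucl n) : F :=
  ∑ i : Fin n, iteratedFDeriv ℝ 2 f x ![basisV n i, basisV n i]

/-- `f` is harmonic on `s`: twice continuously differentiable with vanishing Laplacian. -/
def HarmOn {n : ℕ} {F : Type*} [NormedAddCommGroup F] [NormedSpace ℝ F]
    (f : Eucl n → F) (s : Set (Eucl n)) : Prop :=
  ContDiffOn ℝ 2 f s ∧ ∀ x ∈ s, lap f x = 0

/-- The Jacobian matrix `Dφ(x) = (∂φ⁽ⁱ⁾/∂xⱼ)` of a map `φ : ℝⁿ → ℝⁿ`. -/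
def jacMatrix {n : ℕ} (φ : Eucl n → Eucl n) (x : Eucl n) : Matrix (Fin n) (Fin n) ℝ :=
  Matrix.of fun i j => fderiv ℝ φ x (basisV n j) i

/-- `|Dφ(x)| := |J_φ(x)|^{1/n}`, where `J_φ` is the Jacobian determinant. -/
def normDeriv {n : ℕ} (φ : Eucl n → Eucl n) (x : Eucl n) : ℝ :=
  |(jacMatrix φ x).det| ^ ((n : ℝ)⁻¹)

/-- The weighted composition operator `W_{φ,ψ} f = ψ · (f ∘ φ)`. -/
def wco {n : ℕ} (φ : Eucl n → Eucl n) (ψ : Eucl n → ℂ) (f : Eucl n → ℂ) : Eucl n → ℂ :=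
  fun x => ψ x * f (φ x)

/-- The set of values `(∫_S |f(rζ)|^p dσ(ζ))^{1/p}`, `0 ≤ r < 1`. -/
def hpNormSet (n : ℕ) (p : ℝ) (f : Eucl n → ℂ) : Set ℝ :=
  (fun r : ℝ => (∫ ζ, ‖f (r • ζ)‖ ^ p ∂(sphMeasure n)) ^ (1 / p)) '' Set.Ico (0 : ℝ) 1

/-- The set of values `|f(x)|`, `x ∈ B`. -/
def hInfSet (n : ℕ) (f : Eucl n → ℂ) : Set ℝ := (fun x => ‖f x‖) '' uBall n

/-- Membership in the harmonic Hardy space `h^p(B)`, `1 ≤ p ≤ ∞`. -/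
def MemHp (n : ℕ) (p : ℝ≥0∞) (f : Eucl n → ℂ) : Prop :=
  HarmOn f (uBall n) ∧
    if p = ⊤ then BddAbove (hInfSet n f) else BddAbove (hpNormSet n p.toReal f)

/-- The `h^p(B)` norm, `1 ≤ p ≤ ∞`. -/
def hpNorm (n : ℕ) (p : ℝ≥0∞) (f : Eucl n → ℂ) : ℝ :=
  if p = ⊤ then sSup (hInfSet n f) else sSup (hpNormSet n p.toReal f)

/-- The operator norm of a map `T` on `h^p(B)`. -/
def opNormHp (n : ℕ) (p : ℝ≥0∞) (T : (Eucl n → ℂ) → (Eucl n → ℂ)) : ℝ :=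
  sInf {C : ℝ | 0 ≤ C ∧ ∀ f, MemHp n p f → hpNorm n p (T f) ≤ C * hpNorm n p f}

/-- The one-point compactification `ℝ̂ⁿ = ℝⁿ ∪ {∞}`. -/
abbrev EuclHat (n : ℕ) := OnePoint (Eucl n)

/-- Reflection in the sphere `S(a, r)`, as a self-map of `ℝ̂ⁿ`:
`x ↦ a + r²(x−a)/|x−a|²`, with `a ↦ ∞` and `∞ ↦ a`. -/
def sphereRefl (n : ℕ) (a : Eucl n) (r : ℝ) : EuclHat n → EuclHat n :=
  OnePoint.rec (↑a)
    (fun x => if x = a then OnePoint.infty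
      else ↑(a + (r ^ 2 / ‖x - a‖ ^ 2) • (x - a)))

/-- Reflection in the hyperplane `{x : x·a = t}` (`a` a unit vector), as a self-map of `ℝ̂ⁿ`:
`x ↦ x − 2(x·a − t)a`, with `∞ ↦ ∞`. -/
def hyperRefl (n : ℕ) (a : Eucl n) (t : ℝ) : EuclHat n → EuclHat n :=
  OnePoint.rec OnePoint.infty
    (fun x => ↑(x - (2 * (⟪x, a⟫_ℝ - t)) • a))

/-- A reflection of `ℝ̂ⁿ` in a sphere or a hyperplane. -/
def IsReflection (n : ℕ) (f : EuclHat n → EuclHat n) : Prop :=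
  (∃ a r, 0 < r ∧ f = sphereRefl n a r) ∨
    (∃ a t, ‖a‖ = 1 ∧ f = hyperRefl n a t)

/-- A Möbius transformation of `ℝ̂ⁿ`: a finite composition of reflections in
spheres or hyperplanes. -/
def IsMobiusHat (n : ℕ) (g : EuclHat n → EuclHat n) : Prop :=
  ∃ L : List (EuclHat n → EuclHat n), L ≠ [] ∧ (∀ f ∈ L, IsReflection n f) ∧
    g = L.foldr (· ∘ ·) id

/-- `φ : ℝⁿ → ℝⁿ` is, on `Ω`, the restriction of a Möbius transformation of `ℝ̂ⁿ`. -/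
def IsMobiusRestr (n : ℕ) (φ : Eucl n → Eucl n) (Ω : Set (Eucl n)) : Prop :=
  ∃ g : EuclHat n → EuclHat n, IsMobiusHat n g ∧ ∀ x ∈ Ω, g ↑x = ↑(φ x)

/-- `φ ∈ Möb(B)`: `φ` agrees, on an open neighborhood of the closed unit ball, with a
Möbius transformation of `ℝ̂ⁿ`, and `φ` maps `B` bijectively onto `B`.  (Such a `φ` is
the canonical extension of the Möbius transformation to the closed unit ball.) -/
def IsMobiusBall (n : ℕ) (φ : Eucl n → Eucl n) : Prop :=
  (∃ U : Set (Eucl n), IsOpen U ∧ Metric.closedBall 0 1 ⊆ U ∧ IsMobiusRestr n φ U) ∧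
    Set.BijOn φ (uBall n) (uBall n)

/-- The nontangential approach region `Γ_δ(ζ) = {x ∈ B : |x − ζ| < (δ/2)(1 − |x|²)}`. -/
def ntRegion (n : ℕ) (δ : ℝ) (ζ : Eucl n) : Set (Eucl n) :=
  {x | x ∈ uBall n ∧ ‖x - ζ‖ < δ / 2 * (1 - ‖x‖ ^ 2)}

/-- `g` has nontangential limit `L` at `ζ ∈ S`. -/
def HasNTLimit (n : ℕ) (g : Eucl n → ℂ) (ζ : Eucl n) (L : ℂ) : Prop :=
  ∀ δ : ℝ, 1 < δ → Filter.Tendsto g (nhdsWithin ζ (ntRegion n δ ζ)) (nhds L)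

/-- The Poisson kernel `P(x, ζ) = (1 − |x|²)/|x − ζ|ⁿ` for the unit ball. -/
def poissonK (n : ℕ) (x ζ : Eucl n) : ℝ := (1 - ‖x‖ ^ 2) / ‖x - ζ‖ ^ n

/-- The extended Poisson kernel `P_y(x) = (1 − |x|²|y|²)/(1 − 2x·y + |x|²|y|²)^{n/2}`. -/
def extPoisson (n : ℕ) (y x : Eucl n) : ℝ :=
  (1 - ‖x‖ ^ 2 * ‖y‖ ^ 2) / (1 - 2 * ⟪x, y⟫_ℝ + ‖x‖ ^ 2 * ‖y‖ ^ 2) ^ ((n : ℝ) / 2)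

/-- The Gauss hypergeometric function `₂F₁(a, b; c; r) = ∑ₖ (a)ₖ(b)ₖ/((c)ₖ k!) rᵏ`. -/
def gaussHyper (a b c r : ℝ) : ℝ :=
  ∑' k : ℕ, ((ascPochhammer ℝ k).eval a * (ascPochhammer ℝ k).eval b) /
    ((ascPochhammer ℝ k).eval c * (Nat.factorial k)) * r ^ k

/-- A linear operator on (the function class) `h^p(B)`. -/
def IsLinOnHp (n : ℕ) (p : ℝ≥0∞) (T : (Eucl n → ℂ) → (Eucl n → ℂ)) : Prop :=
  (∀ f, MemHp n p f → MemHp n p (T f)) ∧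
    (∀ f g, MemHp n p f → MemHp n p g → T (f + g) = T f + T g) ∧
    (∀ (c : ℂ) (f), MemHp n p f → T (c • f) = c • T f)

/-- A compact operator on `h^p(B)`: a linear operator mapping the unit ball of `h^p(B)`
to a totally bounded set. -/
def IsCompactOnHp (n : ℕ) (p : ℝ≥0∞) (K : (Eucl n → ℂ) → (Eucl n → ℂ)) : Prop :=
  IsLinOnHp n p K ∧
    ∀ ε : ℝ, 0 < ε → ∃ G : Finset (Eucl n → ℂ),
      ∀ f, MemHp n p f → hpNorm n p f ≤ 1 → ∃ g ∈ G, hpNorm n p (K f - g) ≤ ε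

/-- The essential norm of an operator `T` on `h^p(B)`: the distance, in operator norm,
from `T` to the compact operators on `h^p(B)`. -/
def essNormHp (n : ℕ) (p : ℝ≥0∞) (T : (Eucl n → ℂ) → (Eucl n → ℂ)) : ℝ :=
  sInf {c : ℝ | ∃ K, IsCompactOnHp n p K ∧ opNormHp n p (fun f => T f - K f) = c}

/-- The duality pairing `⟨f, g⟩ = ∫_S f* g* dσ`, relative to a boundary-function
assignment `bd`. -/
def hpPairing (n : ℕ) (bd : (Eucl n → ℂ) → (Eucl n → ℂ)) (f g : Eucl n → ℂ) : ℂ :=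
  ∫ ζ, bd f ζ * bd g ζ ∂(sphMeasure n)

end

/-! ### The normalized surface measure -/

/-- The point of `ℝᵐ⁺¹` whose `i`-th coordinate is `s` and whose other coordinates are `y`. -/
noncomputable def faceMap (m : ℕ) (i : Fin (m + 1)) (s : ℝ) (y : Fin m → ℝ) : Eucl (m + 1) :=
  WithLp.toLp 2 (i.insertNth s y)

lemma faceMap_contDiff (m : ℕ) (i : Fin (m + 1)) (s : ℝ) : ContDiff ℝ 1 (faceMap m i s) := by
  unfold faceMap
  refine contDiff_euclidean.2 fun j => ?_
  refine Fin.succAboveCases i ?_ (fun k => ?_) j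
  · simpa using contDiff_const
  · simpa using contDiff_apply ℝ ℝ k

lemma faceMap_ne_zero (m : ℕ) (i : Fin (m + 1)) {s : ℝ} (hs : s ≠ 0) (y : Fin m → ℝ) :
    faceMap m i s y ≠ 0 := by
  intro h
  have := congrArg (fun v : Eucl (m + 1) => v i) h
  simp [faceMap] at this
  exact hs this

/-- A Lipschitz parametrisation of the sphere by the faces of a cube, projected radially, bounds
its Hausdorff measure. -/
lemma hausdorff_sphere_lt_top (m : ℕ) :
    Measure.hausdorffMeasure (((m + 1 : ℕ) : ℝ) - 1) (uSphere (m + 1)) < ⊤ := by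
  have hd : (((m + 1 : ℕ) : ℝ) - 1) = (m : ℝ) := by push_cast; ring
  rw [hd]
  set Q : Set (Fin m → ℝ) := Set.pi univ fun _ => Icc (-1) 1 with hQ
  have hQc : IsCompact Q := isCompact_univ_pi fun _ => isCompact_Icc
  have hQf : Measure.hausdorffMeasure (m : ℝ) Q < ⊤ := by
    have := hausdorffMeasure_pi_real (ι := Fin m)
    simp only [Fintype.card_fin] at this
    rw [this]; exact hQc.measure_lt_top
  let Φ : Fin (m + 1) × Bool → (Fin m → ℝ) → Eucl (m + 1) := fun a y =>
    (‖faceMap m a.1 (if a.2 then 1 else -1) y‖)⁻¹ • faceMap m a.1 (if a.2 then 1 else -1) y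
  have hΦ : ∀ a, Measure.hausdorffMeasure (m : ℝ) (Φ a '' Q) < ⊤ := by
    intro a
    have hne : ∀ y, faceMap m a.1 (if a.2 then (1 : ℝ) else -1) y ≠ 0 := fun y =>
      faceMap_ne_zero _ _ (by split_ifs <;> norm_num) y
    have hc : ContDiff ℝ 1 (Φ a) := by
      have h1 := faceMap_contDiff m a.1 (if a.2 then (1 : ℝ) else -1)
      exact ((h1.norm ℝ hne).inv (fun y => norm_ne_zero_iff.2 (hne y))).smul h1
    obtain ⟨K, hK⟩ := (hc.locallyLipschitz.locallyLipschitzOn (s := Q)).exists_lipschitzOnWith_of_compact hQc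
    refine (hK.hausdorffMeasure_image_le (d := m) (by positivity)).trans_lt ?_
    refine ENNReal.mul_lt_top ?_ hQf
    exact ENNReal.rpow_lt_top_of_nonneg (by positivity) ENNReal.coe_ne_top
  have hsub : uSphere (m + 1) ⊆ ⋃ a, Φ a '' Q := by
    intro x hx
    have hx1 : ‖x‖ = 1 := by simpa [uSphere] using hx
    -- the face is determined by a coordinate of largest absolute value
    obtain ⟨i, -, hi⟩ := Finset.exists_max_image Finset.univ (fun i => |x i|) ⟨0, Finset.mem_univ _⟩
    have hxi : 0 < |x i| := by
      by_contra h
      have : x = 0 := by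
        ext j
        have := hi j (Finset.mem_univ _)
        have h2 := abs_nonneg (x j)
        simpa using (abs_eq_zero.1 (le_antisymm (by linarith) h2))
      rw [this] at hx1; simp at hx1
    refine mem_iUnion.2 ⟨(i, decide (0 < x i)), fun j => (|x i|)⁻¹ * x (i.succAbove j), ?_, ?_⟩
    · intro j _
      rw [mem_Icc, ← abs_le, abs_mul, abs_inv, abs_abs, inv_mul_le_iff₀ hxi]
      simpa using hi (i.succAbove j) (Finset.mem_univ _)
    · have key : faceMap m i (if decide (0 < x i) then (1 : ℝ) else -1)
          (fun j => (|x i|)⁻¹ * x (i.succAbove j)) = (|x i|)⁻¹ • x := by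
        ext j
        refine Fin.succAboveCases i ?_ (fun k => ?_) j
        · simp only [faceMap]
          by_cases h : 0 < x i
          · simp [h, abs_of_pos h, h.ne']
          · have h' : x i < 0 := lt_of_le_of_ne (not_lt.1 h) (abs_pos.1 hxi)
            simp [h, abs_of_neg h', h'.ne]
        · simp [faceMap]
      simp only [Φ]
      rw [key, norm_smul, hx1, smul_smul]
      simp [hxi.ne']
  calc _ ≤ Measure.hausdorffMeasure (m : ℝ) (⋃ a, Φ a '' Q) := measure_mono hsub
    _ ≤ ∑ a, Measure.hausdorffMeasure (m : ℝ) (Φ a '' Q) := measure_iUnion_fintype_le _ _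
    _ < ⊤ := ENNReal.sum_lt_top.2 fun a _ => hΦ a

/-- The sphere projects, without increasing distances, onto a set with nonempty interior. -/
lemma hausdorff_sphere_pos (m : ℕ) :
    0 < Measure.hausdorffMeasure (((m + 1 : ℕ) : ℝ) - 1) (uSphere (m + 1)) := by
  have hd : (((m + 1 : ℕ) : ℝ) - 1) = (m : ℝ) := by push_cast; ring
  rw [hd]
  let π : Eucl (m + 1) → (Fin m → ℝ) := fun x j => x j.succ
  have hπ : LipschitzWith 1 π := by
    refine LipschitzWith.of_dist_le_mul fun x y => ?_
    rw [NNReal.coe_one, one_mul]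
    refine (dist_pi_le_iff dist_nonneg).2 fun j => ?_
    have := PiLp.norm_apply_le (x - y) j.succ
    simpa [π, dist_eq_norm] using this
  have h1 := hπ.hausdorffMeasure_image_le (d := m) (by positivity) (uSphere (m + 1))
  have h2 : 0 < Measure.hausdorffMeasure (m : ℝ) (π '' uSphere (m + 1)) := by
    have := hausdorffMeasure_pi_real (ι := Fin m)
    simp only [Fintype.card_fin] at this
    rw [this]
    let V : Set (Fin m → ℝ) := {y | ∑ j, y j ^ 2 < 1}
    have hV : IsOpen V := isOpen_lt (by fun_prop) continuous_const
    have hV0 : V.Nonempty := ⟨0, by simp [V]⟩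
    refine (hV.measure_pos volume hV0).trans_le (measure_mono ?_)
    intro y hy
    refine ⟨faceMap m 0 (Real.sqrt (1 - ∑ j, y j ^ 2)) y, ?_, ?_⟩
    · have hy' : 0 ≤ 1 - ∑ j, y j ^ 2 := by
        have : ∑ j, y j ^ 2 < 1 := hy
        linarith
      simp only [uSphere, mem_sphere_iff_norm, sub_zero, faceMap, EuclideanSpace.norm_eq]
      rw [Fin.sum_univ_succ]
      simp [Real.sq_sqrt hy']
    · ext j; simp [π, faceMap]
  have h3 : (((1 : ℝ≥0) : ℝ≥0∞) ^ (m : ℝ)) = 1 := by simp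
  rw [h3, one_mul] at h1
  exact h2.trans_le h1

lemma sphMeasure_prob {n : ℕ} (hn : 1 ≤ n) : IsProbabilityMeasure (sphMeasure n) := by
  obtain ⟨m, rfl⟩ : ∃ m, n = m + 1 := ⟨n - 1, by omega⟩
  constructor
  simp only [sphMeasure, Measure.smul_apply, Measure.restrict_apply_univ, smul_eq_mul]
  exact ENNReal.inv_mul_cancel (hausdorff_sphere_pos m).ne' (hausdorff_sphere_lt_top m).ne

lemma measurableSet_uSphere (n : ℕ) : MeasurableSet (uSphere n) := isClosed_sphere.measurableSet

lemma isCompact_uSphere (n : ℕ) : IsCompact (uSphere n) := isCompact_sphere _ _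

lemma mem_uSphere {n : ℕ} {x : Eucl n} : x ∈ uSphere n ↔ ‖x‖ = 1 := by simp [uSphere]

lemma mem_uBall {n : ℕ} {x : Eucl n} : x ∈ uBall n ↔ ‖x‖ < 1 := by simp [uBall]

lemma isOpen_uBall (n : ℕ) : IsOpen (uBall n) := isOpen_ball

lemma sph_ae (n : ℕ) : ∀ᵐ ζ ∂(sphMeasure n), ζ ∈ uSphere n :=
  Measure.ae_smul_measure (ae_restrict_mem (measurableSet_uSphere n)) _

lemma sph_mp {n : ℕ} (A : Eucl n ≃ₗᵢ[ℝ] Eucl n) :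
    MeasurePreserving A (sphMeasure n) (sphMeasure n) := by
  have h := A.toIsometryEquiv.measurePreserving_hausdorffMeasure ((n : ℝ) - 1)
  have h2 := h.restrict_preimage (measurableSet_uSphere n)
  have h3 : A.toIsometryEquiv ⁻¹' uSphere n = uSphere n := by
    ext x; simp [uSphere]
  rw [h3] at h2
  exact h2.smul_measure _

lemma sph_integral_comp {n : ℕ} {F : Type*} [NormedAddCommGroup F] [NormedSpace ℝ F]
    (A : Eucl n ≃ₗᵢ[ℝ] Eucl n) (g : Eucl n → F) :
    ∫ ζ, g (A ζ) ∂(sphMeasure n) = ∫ ζ, g ζ ∂(sphMeasure n) :=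
  (sph_mp A).integral_comp A.toHomeomorph.measurableEmbedding g

lemma exists_isometry {n : ℕ} {v w : Eucl n} (h : ‖v‖ = ‖w‖) :
    ∃ A : Eucl n ≃ₗᵢ[ℝ] Eucl n, A v = w :=
  ⟨_, Submodule.reflection_sub h⟩

/-- Caps have positive measure: otherwise, by rotation invariance, `σ` would vanish locally. -/
lemma sph_cap_pos {n : ℕ} (hn : 1 ≤ n) {ζ : Eucl n} (hζ : ‖ζ‖ = 1) {δ : ℝ} (hδ : 0 < δ) :
    0 < sphMeasure n (ball ζ δ) := by
  by_contra h0
  have h0 : sphMeasure n (ball ζ δ) = 0 := by simpa using h0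
  have : IsProbabilityMeasure (sphMeasure n) := sphMeasure_prob hn
  have h1 : sphMeasure n (uSphere n) = 0 := by
    refine measure_null_of_locally_null _ fun x hx => ?_
    obtain ⟨A, hA⟩ := exists_isometry (v := x) (w := ζ) ((mem_uSphere.1 hx).trans hζ.symm)
    refine ⟨ball x δ, mem_nhdsWithin_of_mem_nhds (ball_mem_nhds _ hδ), ?_⟩
    have h2 := (sph_mp A).measure_preimage (s := ball ζ δ) measurableSet_ball.nullMeasurableSet
    have h3 : A ⁻¹' ball ζ δ = ball x δ := by
      rw [← hA]; ext y; simp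
    rwa [h3, h0] at h2
  have h2 : sphMeasure n (uSphere n) = 1 := prob_compl_eq_zero_iff (measurableSet_uSphere n) |>.1
    (sph_ae n)
  rw [h1] at h2; exact zero_ne_one h2

lemma sph_aesm {n : ℕ} {F : Type*} [NormedAddCommGroup F] [SecondCountableTopology F]
    {g : Eucl n → F} (hg : ContinuousOn g (uSphere n)) :
    AEStronglyMeasurable g (sphMeasure n) := by
  have := (hg.aestronglyMeasurable (μ := Measure.hausdorffMeasure ((n : ℝ) - 1))
    (measurableSet_uSphere n))
  exact this.smul_measure _

lemma sph_integrable {n : ℕ} (hn : 1 ≤ n) {F : Type*} [NormedAddCommGroup F]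
    [SecondCountableTopology F]
    {g : Eucl n → F} (hg : ContinuousOn g (uSphere n)) : Integrable g (sphMeasure n) := by
  have : IsProbabilityMeasure (sphMeasure n) := sphMeasure_prob hn
  obtain ⟨C, hC⟩ := (isCompact_uSphere n).exists_bound_of_continuousOn hg
  exact Integrable.of_bound (sph_aesm hg) C ((sph_ae n).mono fun x hx => hC x hx)

lemma sph_integral_cont {n : ℕ} (hn : 1 ≤ n) {F : Type*} [NormedAddCommGroup F]
    [NormedSpace ℝ F] [SecondCountableTopology F] {T : Set ℝ} (hT : IsCompact T)
    {H : ℝ → Eucl n → F} (hH : ContinuousOn (fun q : ℝ × Eucl n => H q.1 q.2) (T ×ˢ uSphere n)) :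
    ContinuousOn (fun t => ∫ ζ, H t ζ ∂(sphMeasure n)) T := by
  have : IsProbabilityMeasure (sphMeasure n) := sphMeasure_prob hn
  obtain ⟨C, hC⟩ := (hT.prod (isCompact_uSphere n)).exists_bound_of_continuousOn hH
  refine continuousOn_of_dominated (bound := fun _ => C) (fun t ht => ?_) (fun t ht => ?_)
    (integrable_const _) ?_
  · exact sph_aesm (hH.comp (by fun_prop : ContinuousOn (fun ζ : Eucl n => (t, ζ)) _)
      fun ζ hζ => ⟨ht, hζ⟩)
  · exact (sph_ae n).mono fun ζ hζ => hC (t, ζ) ⟨ht, hζ⟩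
  · exact (sph_ae n).mono fun ζ hζ => hH.comp (by fun_prop : ContinuousOn (fun t : ℝ => (t, ζ)) _)
      fun t ht => ⟨ht, hζ⟩

/-! ### Laplacians and Hessians -/

lemma lap_eq {n : ℕ} {F : Type*} [NormedAddCommGroup F] [NormedSpace ℝ F]
    (f : Eucl n → F) (x : Eucl n) :
    lap f x = ∑ i : Fin n, fderiv ℝ (fderiv ℝ f) x (basisV n i) (basisV n i) := by
  simp [lap, iteratedFDeriv_two_apply]

lemma lap_congr {n : ℕ} {F : Type*} [NormedAddCommGroup F] [NormedSpace ℝ F]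
    {f g : Eucl n → F} {x : Eucl n} (h : f =ᶠ[𝓝 x] g) : lap f x = lap g x := by
  rw [lap_eq, lap_eq, h.fderiv.fderiv_eq]

lemma HarmOn.congr {n : ℕ} {F : Type*} [NormedAddCommGroup F] [NormedSpace ℝ F]
    {f g : Eucl n → F} {s : Set (Eucl n)} (hs : IsOpen s) (hf : HarmOn f s)
    (h : ∀ x ∈ s, g x = f x) : HarmOn g s :=
  ⟨hf.1.congr h, fun x hx => by
    rw [lap_congr (Filter.eventually_of_mem (hs.mem_nhds hx) h), hf.2 x hx]⟩

lemma HarmOn.contDiffAt {n : ℕ} {F : Type*} [NormedAddCommGroup F] [NormedSpace ℝ F]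
    {f : Eucl n → F} {s : Set (Eucl n)} (hs : IsOpen s) (hf : HarmOn f s) {x : Eucl n}
    (hx : x ∈ s) : ContDiffAt ℝ 2 f x := hf.1.contDiffAt (hs.mem_nhds hx)

/-- The trace of a Hessian does not depend on the orthonormal basis. -/
lemma lap_eq_isometry {n : ℕ} {F : Type*} [NormedAddCommGroup F] [NormedSpace ℝ F]
    (f : Eucl n → F) (x : Eucl n) (R : Eucl n ≃ₗᵢ[ℝ] Eucl n) :
    ∑ i : Fin n, fderiv ℝ (fderiv ℝ f) x (R (basisV n i)) (R (basisV n i)) = lap f x := by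
  have h1 := congrFun (InnerProductSpace.laplacian_eq_iteratedFDeriv_orthonormalBasis f
    (EuclideanSpace.basisFun (Fin n) ℝ)) x
  have h2 := congrFun (InnerProductSpace.laplacian_eq_iteratedFDeriv_orthonormalBasis f
    ((EuclideanSpace.basisFun (Fin n) ℝ).map R)) x
  rw [h1] at h2
  simp only [iteratedFDeriv_two_apply] at h2
  rw [lap_eq]
  simpa [basisV] using h2.symm

section calculus
variable {E F G : Type*} [NormedAddCommGroup E] [NormedSpace ℝ E] [NormedAddCommGroup F]
  [NormedSpace ℝ F] [NormedAddCommGroup G] [NormedSpace ℝ G]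

lemma ContDiffAt.fderiv_two {f : E → F} {x : E} (hf : ContDiffAt ℝ 2 f x) :
    DifferentiableAt ℝ (fderiv ℝ f) x :=
  (hf.fderiv_right (m := 1) (by norm_num)).differentiableAt (by norm_num)

lemma ContDiffAt.eventually_diff {f : E → F} {x : E} (hf : ContDiffAt ℝ 2 f x) :
    ∀ᶠ y in 𝓝 x, DifferentiableAt ℝ f y :=
  (hf.eventually (by simp)).mono fun _ hy => hy.differentiableAt (by norm_num)

lemma hess_comp {g : F → G} {h : E → F} {x : E} (hg : ContDiffAt ℝ 2 g (h x))
    (hh : ContDiffAt ℝ 2 h x) (v w : E) :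
    fderiv ℝ (fderiv ℝ (fun y => g (h y))) x v w =
      fderiv ℝ (fderiv ℝ g) (h x) (fderiv ℝ h x v) (fderiv ℝ h x w)
        + fderiv ℝ g (h x) (fderiv ℝ (fderiv ℝ h) x v w) := by
  have e : fderiv ℝ (fun y => g (h y)) =ᶠ[𝓝 x]
      fun y => (fderiv ℝ g (h y)).comp (fderiv ℝ h y) := by
    filter_upwards [hh.eventually_diff, hh.continuousAt.eventually hg.eventually_diff]
      with y hy1 hy2
    exact fderiv_comp y hy2 hy1
  rw [e.fderiv_eq]
  have h1 : HasFDerivAt (fun y => fderiv ℝ g (h y))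
      ((fderiv ℝ (fderiv ℝ g) (h x)).comp (fderiv ℝ h x)) x :=
    hg.fderiv_two.hasFDerivAt.comp x (hh.differentiableAt (by norm_num)).hasFDerivAt
  rw [(h1.clm_comp hh.fderiv_two.hasFDerivAt).fderiv]
  simp [add_comm]

lemma hess_smul {u : E → ℝ} {g : E → F} {x : E} (hu : ContDiffAt ℝ 2 u x)
    (hg : ContDiffAt ℝ 2 g x) (v : E) :
    fderiv ℝ (fderiv ℝ (fun y => u y • g y)) x v v =
      u x • fderiv ℝ (fderiv ℝ g) x v v + (2 * fderiv ℝ u x v) • fderiv ℝ g x v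
        + fderiv ℝ (fderiv ℝ u) x v v • g x := by
  have hF : ContDiffAt ℝ 2 (fun y => u y • g y) x := hu.smul hg
  have e : (fun y => fderiv ℝ (fun y => u y • g y) y v) =ᶠ[𝓝 x]
      fun y => u y • fderiv ℝ g y v + fderiv ℝ u y v • g y := by
    filter_upwards [hu.eventually_diff, hg.eventually_diff] with y hy1 hy2
    rw [fderiv_fun_smul hy1 hy2]; simp
  have hu1 := (hu.differentiableAt (by norm_num)).hasFDerivAt
  have hg1 := (hg.differentiableAt (by norm_num)).hasFDerivAt
  have hc := hasFDerivAt_const (𝕜 := ℝ) v x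
  have h0 := (hF.fderiv_two.hasFDerivAt.clm_apply hc).fderiv
  have h1 := hu1.fun_smul (hg.fderiv_two.hasFDerivAt.clm_apply hc)
  have h2 := (hu.fderiv_two.hasFDerivAt.clm_apply hc).fun_smul hg1
  have h3 := (h1.fun_add h2).fderiv
  rw [← e.fderiv_eq, h0] at h3
  have h4 := congrArg (fun L => L v) h3
  simp at h4
  rw [h4, two_mul, add_smul]
  abel

end calculus

section power
variable {E : Type*} [NormedAddCommGroup E] [InnerProductSpace ℝ E]

lemma hasFDerivAt_npow (c : E) (ε s : ℝ) {y : E} (hy : 0 < ‖y - c‖ ^ 2 + ε) :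
    HasFDerivAt (fun y => (‖y - c‖ ^ 2 + ε) ^ s)
      ((2 * s * (‖y - c‖ ^ 2 + ε) ^ (s - 1)) • innerSL ℝ (y - c)) y := by
  have h1 : HasFDerivAt (fun y => ‖y - c‖ ^ 2 + ε) ((2 : ℝ) • innerSL ℝ (y - c)) y := by
    have := (((hasFDerivAt_id (𝕜 := ℝ) y).sub_const c).norm_sq).add_const ε
    refine this.congr_fderiv ?_
    ext w; simp
  have h2 := h1.rpow_const (p := s) (Or.inl hy.ne')
  refine h2.congr_fderiv ?_
  rw [smul_smul]; congr 1; ring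

lemma contDiffAt_npow (c : E) (ε s : ℝ) {y : E} (hy : 0 < ‖y - c‖ ^ 2 + ε) :
    ContDiffAt ℝ 2 (fun y => (‖y - c‖ ^ 2 + ε) ^ s) y := by
  have h1 : ContDiffAt ℝ 2 (fun y => ‖y - c‖ ^ 2 + ε) y :=
    ((contDiffAt_id.sub contDiffAt_const).norm_sq ℝ).add contDiffAt_const
  exact h1.rpow_const_of_ne hy.ne'

/-- The quadratic form of the Hessian of a power of `|y - c|² + ε`. With `ε > 0` it serves to
regularize `|h|^p`, and with `ε = 0` to differentiate the conformal factor of an inversion. -/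
lemma hess_npow (c : E) (ε s : ℝ) {x : E} (hx : 0 < ‖x - c‖ ^ 2 + ε) (w : E) :
    fderiv ℝ (fderiv ℝ (fun y => (‖y - c‖ ^ 2 + ε) ^ s)) x w w =
      2 * s * (‖x - c‖ ^ 2 + ε) ^ (s - 1) * ‖w‖ ^ 2
       + 4 * s * (s - 1) * (‖x - c‖ ^ 2 + ε) ^ (s - 2) * ⟪x - c, w⟫_ℝ ^ 2 := by
  have hev : ∀ᶠ y in 𝓝 x, 0 < ‖y - c‖ ^ 2 + ε :=
    (by fun_prop : ContinuousAt (fun y => ‖y - c‖ ^ 2 + ε) x).eventually_const_lt hx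
  have e : fderiv ℝ (fun y => (‖y - c‖ ^ 2 + ε) ^ s) =ᶠ[𝓝 x]
      fun y => (2 * s * (‖y - c‖ ^ 2 + ε) ^ (s - 1)) • innerSL ℝ (y - c) :=
    hev.mono fun y hy => (hasFDerivAt_npow c ε s hy).fderiv
  rw [e.fderiv_eq]
  have h1 := (hasFDerivAt_npow c ε (s - 1) hx).const_mul (2 * s)
  have h2 : HasFDerivAt (fun y : E => innerSL ℝ (y - c)) (innerSL ℝ : E →L[ℝ] E →L[ℝ] ℝ) x := by
    have := (innerSL ℝ : E →L[ℝ] E →L[ℝ] ℝ).hasFDerivAt (x := x - c)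
    exact this.comp x ((hasFDerivAt_id (𝕜 := ℝ) x).sub_const c)
  rw [(h1.fun_smul h2).fderiv]
  have h3 : (innerSL ℝ : E →L[ℝ] E →L[ℝ] ℝ) w w = ‖w‖ ^ 2 := real_inner_self_eq_norm_sq w
  have h4 : innerSL ℝ (x - c) w = ⟪x - c, w⟫_ℝ := rfl
  simp only [add_apply, smul_apply,
    ContinuousLinearMap.smulRight_apply, h3, h4, smul_eq_mul]
  rw [show s - 1 - 1 = s - 2 by ring]
  ring

end power

/-- Powers of `|h|² + ε` with exponent at least `1/2` are subharmonic when `h` is harmonic. -/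
lemma lap_comp_pow_nonneg {n : ℕ} {h : Eucl n → ℂ} {x : Eucl n} (hh : ContDiffAt ℝ 2 h x)
    (hl : lap h x = 0) {ε q : ℝ} (hε : 0 < ε) (hq : 1 / 2 ≤ q) :
    0 ≤ lap (fun y => (‖h y‖ ^ 2 + ε) ^ q) x := by
  have hpos : ∀ z : ℂ, 0 < ‖z - 0‖ ^ 2 + ε := fun z => by positivity
  have key := hess_comp (g := fun z : ℂ => (‖z - 0‖ ^ 2 + ε) ^ q) (h := h) (x := x)
    (contDiffAt_npow 0 ε q (hpos _)) hh
  simp only [sub_zero] at key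
  rw [lap_eq]
  simp only [key, Finset.sum_add_distrib]
  rw [← map_sum, ← lap_eq, hl, map_zero, add_zero]
  refine Finset.sum_nonneg fun i _ => ?_
  set w := fderiv ℝ h x (basisV n i)
  have h2 := hess_npow (0 : ℂ) ε q (hpos (h x)) w
  simp only [sub_zero] at h2
  rw [h2]
  set N := ‖h x‖ ^ 2 + ε with hN
  have hN0 : 0 < N := by positivity
  have h3 : N ^ (q - 1) = N ^ (q - 2) * N := by
    rw [← Real.rpow_add_one hN0.ne']; congr 1; ring
  have h4 : ⟪h x, w⟫_ℝ ^ 2 ≤ N * ‖w‖ ^ 2 := by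
    have := abs_real_inner_le_norm (h x) w
    have h5 : ⟪h x, w⟫_ℝ ^ 2 ≤ (‖h x‖ * ‖w‖) ^ 2 := sq_le_sq' (by linarith [neg_abs_le ⟪h x, w⟫_ℝ]) ((le_abs_self _).trans this)
    nlinarith [sq_nonneg ‖w‖]
  have h6 : 0 ≤ N ^ (q - 2) := by positivity
  rw [h3]
  have h7 : 0 ≤ ⟪h x, w⟫_ℝ ^ 2 := sq_nonneg _
  have h8 : 0 ≤ q * N ^ (q - 2) := by positivity
  have : 2 * q * (N ^ (q - 2) * N) * ‖w‖ ^ 2 + 4 * q * (q - 1) * N ^ (q - 2) * ⟪h x, w⟫_ℝ ^ 2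
      = (q * N ^ (q - 2)) * (2 * (N * ‖w‖ ^ 2 - ⟪h x, w⟫_ℝ ^ 2) + (4 * q - 2) * ⟪h x, w⟫_ℝ ^ 2) := by ring
  rw [this]
  refine mul_nonneg h8 (add_nonneg (by linarith) (mul_nonneg (by linarith) h7))

/-! ### Monotonicity of spherical means -/

/-- Differentiation under the integral over the sphere; the integrand and its derivative need to be
controlled only on the sphere, where compactness provides the dominating constant. -/
lemma sph_hasDerivAt {n : ℕ} (hn : 1 ≤ n) {I : Set ℝ} (hI : IsOpen I) {H H' : ℝ → Eucl n → ℝ}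
    (hH : ContinuousOn (fun q : ℝ × Eucl n => H q.1 q.2) (I ×ˢ uSphere n))
    (hH' : ContinuousOn (fun q : ℝ × Eucl n => H' q.1 q.2) (I ×ˢ uSphere n))
    (hd : ∀ s ∈ I, ∀ ζ ∈ uSphere n, HasDerivAt (fun s => H s ζ) (H' s ζ) s)
    {s₀ : ℝ} (hs : s₀ ∈ I) :
    HasDerivAt (fun s => ∫ ζ, H s ζ ∂(sphMeasure n)) (∫ ζ, H' s₀ ζ ∂(sphMeasure n)) s₀ := by
  have : IsProbabilityMeasure (sphMeasure n) := sphMeasure_prob hn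
  obtain ⟨ε, hε, hb⟩ := Metric.nhds_basis_closedBall.mem_iff.1 (hI.mem_nhds hs)
  have slice : ∀ {K : ℝ → Eucl n → ℝ} (_ : ContinuousOn (fun q : ℝ × Eucl n => K q.1 q.2)
      (I ×ˢ uSphere n)) {s : ℝ}, s ∈ I → ContinuousOn (K s) (uSphere n) := by
    intro K hK s hs
    exact hK.comp (f := fun ζ => (s, ζ)) (by fun_prop) fun ζ hζ => ⟨hs, hζ⟩
  obtain ⟨C, hC⟩ := ((isCompact_closedBall s₀ ε).prod
    (isCompact_uSphere n)).exists_bound_of_continuousOn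
      (hH'.mono (prod_mono hb Subset.rfl))
  refine (hasDerivAt_integral_of_dominated_loc_of_deriv_le (F := H) (F' := H')
    (bound := fun _ => C) (s := closedBall s₀ ε) (closedBall_mem_nhds _ hε) ?_ ?_ ?_ ?_ ?_ ?_).2
  · filter_upwards [hI.mem_nhds hs] with s hs using sph_aesm (slice hH hs)
  · exact sph_integrable hn (slice hH hs)
  · exact sph_aesm (slice hH' hs)
  · exact (sph_ae n).mono fun ζ hζ s hs => hC (s, ζ) ⟨hs, hζ⟩
  · exact integrable_const C
  · exact (sph_ae n).mono fun ζ hζ s hs => hd s (hb hs) ζ hζ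

lemma basisV_norm {n : ℕ} (i : Fin n) : ‖basisV n i‖ = 1 := by simp [basisV]

lemma inner_basisV {n : ℕ} (i j : Fin n) : ⟪basisV n i, basisV n j⟫_ℝ = if i = j then 1 else 0 := by
  rw [basisV, EuclideanSpace.inner_single_left]
  simp [basisV]

lemma basisV_apply {n : ℕ} (i j : Fin n) : basisV n i j = if j = i then 1 else 0 := by
  simp [basisV]

lemma inner_basisV_left {n : ℕ} (i : Fin n) (x : Eucl n) : ⟪basisV n i, x⟫_ℝ = x i := by
  rw [basisV, EuclideanSpace.inner_single_left]
  simp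

lemma sum_basisV {n : ℕ} (x : Eucl n) : ∑ i, x i • basisV n i = x := by
  have := (EuclideanSpace.basisFun (Fin n) ℝ).sum_repr x
  simpa [basisV] using this

/-- The generator of rotations in the coordinate plane spanned by `eᵢ` and `eⱼ`. -/
noncomputable def rotGen {n : ℕ} (i j : Fin n) (x : Eucl n) : Eucl n := x i • basisV n j - x j • basisV n i

/-- Infinitesimal form of the rotation invariance of `σ`. -/
lemma rot_integral {n : ℕ} (hn : 1 ≤ n) {w : Eucl n → ℝ} (hw : ContDiffOn ℝ 1 w (uBall n))
    {r : ℝ} (hr0 : 0 ≤ r) (hr : r < 1) (i j : Fin n) :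
    ∫ ζ, fderiv ℝ w (r • ζ) (rotGen i j (r • ζ)) ∂(sphMeasure n) = 0 := by
  by_cases hij : i = j
  · subst hij; simp [rotGen]
  let u : ℝ → Eucl n := fun s => Real.cos s • basisV n i + Real.sin s • basisV n j
  let u' : ℝ → Eucl n := fun s => -Real.sin s • basisV n i + Real.cos s • basisV n j
  have hu : ∀ s, HasDerivAt u (u' s) s := fun s =>
    ((Real.hasDerivAt_cos s).smul_const _).add ((Real.hasDerivAt_sin s).smul_const _)
  have hu1 : ∀ s, ‖u s‖ = 1 := by
    intro s
    have h1 : ‖u s‖ ^ 2 = 1 := by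
      rw [← real_inner_self_eq_norm_sq]
      simp only [u, inner_add_left, inner_add_right, real_inner_smul_left, real_inner_smul_right,
        inner_basisV, hij, Ne.symm hij, if_true, if_false]
      nlinarith [Real.sin_sq_add_cos_sq s]
    nlinarith [norm_nonneg (u s)]
  -- A product of two reflections rotates the plane spanned by `eᵢ`, `eⱼ`.
  let Y : Eucl n → Eucl n := fun x => (2 * x i) • basisV n i - x
  let R : ℝ → Eucl n → Eucl n := fun s x => (2 * ⟪u s, Y x⟫_ℝ) • u s - Y x
  let R' : ℝ → Eucl n → Eucl n := fun s x => (2 * ⟪u s, Y x⟫_ℝ) • u' s + (2 * ⟪u' s, Y x⟫_ℝ) • u s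
  have hRd : ∀ s x, HasDerivAt (fun s => R s x) (R' s x) s := by
    intro s x
    have h1 : HasDerivAt (fun s => ⟪u s, Y x⟫_ℝ) (⟪u' s, Y x⟫_ℝ) s := by
      have := (hu s).inner ℝ (hasDerivAt_const s (Y x))
      simpa using this
    have := ((h1.const_mul 2).smul (hu s)).sub_const (Y x)
    exact this
  have hRe : ∀ s, ∃ A : Eucl n ≃ₗᵢ[ℝ] Eucl n, ∀ x, A x = R s x := by
    intro s
    refine ⟨((ℝ ∙ basisV n i).reflection).trans ((ℝ ∙ u s).reflection), fun x => ?_⟩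
    have h1 : (ℝ ∙ basisV n i).reflection x = Y x := by
      rw [Submodule.reflection_singleton_apply]
      simp only [Y, basisV_norm, inner_basisV_left]
      simp [mul_smul, ofNat_smul_eq_nsmul]
    have h2 : (ℝ ∙ u s).reflection (Y x) = R s x := by
      rw [Submodule.reflection_singleton_apply]
      simp only [R, hu1]
      simp [mul_smul, ofNat_smul_eq_nsmul]
    rw [LinearIsometryEquiv.trans_apply, h1, h2]
  have hmem : ∀ s, ∀ ζ ∈ uSphere n, r • R s ζ ∈ uBall n := by
    intro s ζ hζ
    obtain ⟨A, hA⟩ := hRe s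
    rw [mem_uBall, ← hA, norm_smul, A.norm_map, mem_uSphere.1 hζ, mul_one, Real.norm_of_nonneg hr0]
    exact hr
  have hRc : Continuous fun q : ℝ × Eucl n => R q.1 q.2 := by
    simp only [R, Y, u]; fun_prop
  have hRc' : Continuous fun q : ℝ × Eucl n => R' q.1 q.2 := by
    simp only [R', Y, u, u']; fun_prop
  have hDw : ContinuousOn (fderiv ℝ w) (uBall n) := hw.continuousOn_fderiv_of_isOpen (isOpen_uBall n) le_rfl
  have hcr : Continuous fun q : ℝ × Eucl n => r • R q.1 q.2 := hRc.const_smul r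
  have hd := sph_hasDerivAt hn (I := univ) isOpen_univ (H := fun s ζ => w (r • R s ζ))
    (H' := fun s ζ => fderiv ℝ w (r • R s ζ) (r • R' s ζ))
    (hw.continuousOn.comp hcr.continuousOn fun q hq => hmem _ _ hq.2)
    ((hDw.comp hcr.continuousOn fun q hq => hmem _ _ hq.2).clm_apply
      (hRc'.const_smul r).continuousOn)
    (fun s _ ζ hζ => by
      have h1 : HasFDerivAt w (fderiv ℝ w (r • R s ζ)) (r • R s ζ) :=
        (((hw.contDiffAt ((isOpen_uBall n).mem_nhds (hmem s ζ hζ))).differentiableAt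
          (by norm_num))).hasFDerivAt
      exact h1.comp_hasDerivAt s ((hRd s ζ).const_smul r)) (mem_univ (0 : ℝ))
  have hconst : (fun s => ∫ ζ, w (r • R s ζ) ∂(sphMeasure n))
      = fun _ => ∫ ζ, w (r • ζ) ∂(sphMeasure n) := by
    funext s
    obtain ⟨A, hA⟩ := hRe s
    rw [← sph_integral_comp A fun ζ => w (r • ζ)]
    simp [hA]
  rw [hconst] at hd
  have h0 := hd.unique (hasDerivAt_const _ _)
  have hz : ∀ ζ, fderiv ℝ w (r • R 0 ζ) (r • R' 0 ζ)
      = 2 * fderiv ℝ w (r • ζ) (rotGen i j (r • ζ)) := by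
    intro ζ
    have e1 : R 0 ζ = ζ := by
      simp only [R, Y, u, Real.cos_zero, Real.sin_zero, one_smul, zero_smul, add_zero,
        inner_sub_right, real_inner_smul_right, inner_basisV_left, basisV_apply, if_true]
      rw [show (2 * (2 * ζ i * 1 - ζ i)) = 2 * ζ i by ring]; abel
    have e2 : r • R' 0 ζ = (2 : ℝ) • rotGen i j (r • ζ) := by
      simp only [R', Y, u, u', Real.cos_zero, Real.sin_zero, one_smul, zero_smul, add_zero,
        inner_sub_right, real_inner_smul_right, inner_basisV_left, basisV_apply, if_true, neg_zero,
        zero_add, Ne.symm hij, if_false, rotGen, PiLp.smul_apply, smul_eq_mul]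
      module
    rw [e1, e2, map_smul, smul_eq_mul]
  simp only [hz] at h0
  rw [integral_const_mul] at h0
  linarith

lemma sum_rotGen_rotGen {n : ℕ} (x : Eucl n) :
    ∑ i : Fin n, ∑ j, rotGen i j (rotGen i j x) = (-2 * ((n : ℝ) - 1)) • x := by
  have h : ∀ i j : Fin n, rotGen i j (rotGen i j x) =
      (if i = j then x i • basisV n i else 0) + (if i = j then x i • basisV n i else 0)
        - x i • basisV n i - x j • basisV n j := by
    intro i j
    by_cases hij : i = j
    · subst hij; simp [rotGen]
    · simp [rotGen, hij, Ne.symm hij, basisV]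
      abel
  simp only [h, Finset.sum_sub_distrib, Finset.sum_add_distrib, Finset.sum_ite_eq,
    Finset.mem_univ, if_true, sum_basisV, Finset.sum_const, Finset.card_univ, Fintype.card_fin,
    ← Finset.smul_sum]
  rw [← Nat.cast_smul_eq_nsmul ℝ]
  module

lemma sum_bilin_rotGen {n : ℕ} (x : Eucl n) (b : Eucl n →L[ℝ] Eucl n →L[ℝ] ℝ) :
    ∑ i : Fin n, ∑ j, b (rotGen i j x) (rotGen i j x)
      = 2 * ‖x‖ ^ 2 * ∑ i, b (basisV n i) (basisV n i) - 2 * b x x := by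
  have hb : b x x = ∑ i : Fin n, ∑ j, x i * x j * b (basisV n i) (basisV n j) := by
    conv_lhs => rw [← sum_basisV x]
    simp only [map_sum, map_smul, sum_apply, smul_apply, smul_eq_mul]
    rw [Finset.sum_comm]
    simp only [Finset.mul_sum]
    refine Finset.sum_congr rfl fun i _ => Finset.sum_congr rfl fun j _ => by ring
  have hx : ‖x‖ ^ 2 = ∑ i, x i ^ 2 := EuclideanSpace.real_norm_sq_eq x
  have h : ∀ i j : Fin n, b (rotGen i j x) (rotGen i j x) =
      x i ^ 2 * b (basisV n j) (basisV n j) + x j ^ 2 * b (basisV n i) (basisV n i)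
      - x i * x j * b (basisV n i) (basisV n j) - x j * x i * b (basisV n j) (basisV n i) := by
    intro i j
    simp only [rotGen, map_sub, map_smul, sub_apply, smul_apply, smul_eq_mul]
    ring
  simp only [h, Finset.sum_sub_distrib, Finset.sum_add_distrib]
  rw [Finset.sum_comm (f := fun i j => x j * x i * b (basisV n j) (basisV n i)), ← hb, hx]
  simp only [← Finset.mul_sum, ← Finset.sum_mul]
  ring

/-- Integrating the rotation identity twice expresses the spherical mean of the Laplacian
through radial derivatives. -/
lemma mean_lap {n : ℕ} (hn : 1 ≤ n) {v : Eucl n → ℝ} (hv : ContDiffOn ℝ 2 v (uBall n))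
    {r : ℝ} (hr0 : 0 ≤ r) (hr : r < 1) :
    ∫ ζ, (2 * ‖r • ζ‖ ^ 2 * lap v (r • ζ) - 2 * fderiv ℝ (fderiv ℝ v) (r • ζ) (r • ζ) (r • ζ)
      - 2 * ((n : ℝ) - 1) * fderiv ℝ v (r • ζ) (r • ζ)) ∂(sphMeasure n) = 0 := by
  have hO := isOpen_uBall n
  have hDv : ContDiffOn ℝ 1 (fderiv ℝ v) (uBall n) := hv.fderiv_of_isOpen hO (by norm_num)
  let L : Fin n → Fin n → Eucl n →L[ℝ] Eucl n := fun i j =>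
    (EuclideanSpace.proj i : Eucl n →L[ℝ] ℝ).smulRight (basisV n j)
      - (EuclideanSpace.proj j : Eucl n →L[ℝ] ℝ).smulRight (basisV n i)
  have hL : ∀ i j x, L i j x = rotGen i j x := fun i j x => by simp [L, rotGen]
  have hw : ∀ i j, ContDiffOn ℝ 1 (fun x => fderiv ℝ v x (L i j x)) (uBall n) := fun i j =>
    hDv.clm_apply (L i j).contDiff.contDiffOn
  have hmem : ∀ ζ ∈ uSphere n, r • ζ ∈ uBall n := by
    intro ζ hζ
    rw [mem_uBall, norm_smul, mem_uSphere.1 hζ, mul_one, Real.norm_of_nonneg hr0]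
    exact hr
  have hfd : ∀ i j, ∀ ζ ∈ uSphere n,
      fderiv ℝ (fun x => fderiv ℝ v x (L i j x)) (r • ζ) (rotGen i j (r • ζ)) =
      fderiv ℝ (fderiv ℝ v) (r • ζ) (rotGen i j (r • ζ)) (rotGen i j (r • ζ))
        + fderiv ℝ v (r • ζ) (rotGen i j (rotGen i j (r • ζ))) := by
    intro i j ζ hζ
    have h1 := (hv.contDiffAt (hO.mem_nhds (hmem ζ hζ))).fderiv_two.hasFDerivAt
    rw [(h1.clm_apply (L i j).hasFDerivAt).fderiv]
    simp [hL, add_comm]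
  have hsum : ∀ᵐ ζ ∂(sphMeasure n), (2 * ‖r • ζ‖ ^ 2 * lap v (r • ζ)
      - 2 * fderiv ℝ (fderiv ℝ v) (r • ζ) (r • ζ) (r • ζ)
      - 2 * ((n : ℝ) - 1) * fderiv ℝ v (r • ζ) (r • ζ)) = ∑ i : Fin n, ∑ j,
        fderiv ℝ (fun x => fderiv ℝ v x (L i j x)) (r • ζ) (rotGen i j (r • ζ)) := by
    filter_upwards [sph_ae n] with ζ hζ
    simp only [hfd _ _ ζ hζ, Finset.sum_add_distrib, ← map_sum, sum_rotGen_rotGen]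
    rw [sum_bilin_rotGen, lap_eq, map_smul _ (-2 * ((n : ℝ) - 1)), smul_eq_mul]
    ring
  have h_int : ∀ i j, Integrable (fun ζ => fderiv ℝ (fun x => fderiv ℝ v x (L i j x)) (r • ζ)
      (rotGen i j (r • ζ))) (sphMeasure n) := by
    intro i j
    refine sph_integrable hn ?_
    simp only [← hL]
    exact (((hw i j).continuousOn_fderiv_of_isOpen hO le_rfl).comp
      (by fun_prop : Continuous fun ζ : Eucl n => r • ζ).continuousOn hmem).clm_apply
        (by fun_prop)
  rw [integral_congr_ae hsum, integral_finsetSum _ fun i _ => integrable_finsetSum _ fun j _ => h_int i j]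
  refine Finset.sum_eq_zero fun i _ => ?_
  rw [integral_finsetSum _ fun j _ => h_int i j]
  exact Finset.sum_eq_zero fun j _ => rot_integral hn (hw i j) hr0 hr i j

/-- Spherical means of a `C²` subharmonic function increase with the radius. -/
lemma mean_mono {n : ℕ} (hn : 2 ≤ n) {v : Eucl n → ℝ} (hv : ContDiffOn ℝ 2 v (uBall n))
    (hl : ∀ x ∈ uBall n, 0 ≤ lap v x) {r s : ℝ} (hr : 0 ≤ r) (hrs : r ≤ s) (hs : s < 1) :
    ∫ ζ, v (r • ζ) ∂(sphMeasure n) ≤ ∫ ζ, v (s • ζ) ∂(sphMeasure n) := by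
  have hn1 : 1 ≤ n := by omega
  have hO := isOpen_uBall n
  have hDv : ContDiffOn ℝ 1 (fderiv ℝ v) (uBall n) := hv.fderiv_of_isOpen hO (by norm_num)
  have hDDv := hDv.continuousOn_fderiv_of_isOpen hO le_rfl
  have hI : IsOpen (Ioo (-1 : ℝ) 1) := isOpen_Ioo
  have hmem : ∀ r ∈ Ioo (-1 : ℝ) 1, ∀ ζ ∈ uSphere n, r • ζ ∈ uBall n := by
    intro r hr ζ hζ
    rw [mem_uBall, norm_smul, mem_uSphere.1 hζ, mul_one, Real.norm_eq_abs, abs_lt]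
    exact hr
  have hsc : ContinuousOn (fun q : ℝ × Eucl n => q.1 • q.2) (Ioo (-1 : ℝ) 1 ×ˢ uSphere n) := by
    fun_prop
  have hmt : MapsTo (fun q : ℝ × Eucl n => q.1 • q.2) (Ioo (-1 : ℝ) 1 ×ˢ uSphere n) (uBall n) :=
    fun q hq => hmem _ hq.1 _ hq.2
  have hsnd : ContinuousOn (fun q : ℝ × Eucl n => q.2) (Ioo (-1 : ℝ) 1 ×ˢ uSphere n) := by
    fun_prop
  have hline : ∀ (r : ℝ) (ζ : Eucl n), HasDerivAt (fun r : ℝ => r • ζ) ζ r := fun r ζ => by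
    simpa using (hasDerivAt_id r).smul_const ζ
  set P : ℝ → ℝ := fun r => ∫ ζ, fderiv ℝ v (r • ζ) ζ ∂(sphMeasure n) with hP
  set P' : ℝ → ℝ := fun r => ∫ ζ, fderiv ℝ (fderiv ℝ v) (r • ζ) ζ ζ ∂(sphMeasure n) with hP'
  have hm : ∀ r ∈ Ioo (-1 : ℝ) 1,
      HasDerivAt (fun r => ∫ ζ, v (r • ζ) ∂(sphMeasure n)) (P r) r := by
    intro r hr
    have hd : ∀ r ∈ Ioo (-1 : ℝ) 1, ∀ ζ ∈ uSphere n,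
        HasDerivAt (fun r : ℝ => v (r • ζ)) (fderiv ℝ v (r • ζ) ζ) r := by
      intro r hr ζ hζ
      have h1 : HasFDerivAt v (fderiv ℝ v (r • ζ)) (r • ζ) :=
        ((hv.contDiffAt (hO.mem_nhds (hmem r hr ζ hζ))).differentiableAt
          (by norm_num)).hasFDerivAt
      exact h1.comp_hasDerivAt r (hline r ζ)
    have c1 := (hDv.continuousOn.comp hsc hmt).clm_apply hsnd
    exact sph_hasDerivAt hn1 hI (H := fun r ζ => v (r • ζ))
      (H' := fun r ζ => fderiv ℝ v (r • ζ) ζ) (hv.continuousOn.comp hsc hmt) c1 hd hr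
  have hPd : ∀ r ∈ Ioo (-1 : ℝ) 1, HasDerivAt P (P' r) r := by
    intro r hr
    have hd : ∀ r ∈ Ioo (-1 : ℝ) 1, ∀ ζ ∈ uSphere n, HasDerivAt
        (fun r : ℝ => fderiv ℝ v (r • ζ) ζ) (fderiv ℝ (fderiv ℝ v) (r • ζ) ζ ζ) r := by
      intro r hr ζ hζ
      have h1 : HasFDerivAt (fderiv ℝ v) (fderiv ℝ (fderiv ℝ v) (r • ζ)) (r • ζ) :=
        (hv.contDiffAt (hO.mem_nhds (hmem r hr ζ hζ))).fderiv_two.hasFDerivAt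
      have h2 : HasDerivAt (fun r : ℝ => fderiv ℝ v (r • ζ))
          (fderiv ℝ (fderiv ℝ v) (r • ζ) ζ) r := h1.comp_hasDerivAt r (hline r ζ)
      have h3 := h2.clm_apply (hasDerivAt_const r ζ)
      rw [map_zero, add_zero] at h3
      exact h3
    have c1 := (hDv.continuousOn.comp hsc hmt).clm_apply hsnd
    have c2 := ((hDDv.comp hsc hmt).clm_apply hsnd).clm_apply hsnd
    exact sph_hasDerivAt hn1 hI (H := fun r ζ => fderiv ℝ v (r • ζ) ζ)
      (H' := fun r ζ => fderiv ℝ (fderiv ℝ v) (r • ζ) ζ ζ) c1 c2 hd hr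
  -- The radial part of the Laplacian, in terms of the derivative `P` of the spherical mean.
  have key : ∀ r ∈ Ioo (0 : ℝ) 1, 0 ≤ r * P' r + ((n : ℝ) - 1) * P r := by
    intro r hr
    have hr' : r ∈ Ioo (-1 : ℝ) 1 := ⟨by linarith [hr.1], hr.2⟩
    have hc : Continuous fun ζ : Eucl n => r • ζ := by fun_prop
    have hcid : ContinuousOn (fun ζ : Eucl n => ζ) (uSphere n) := by fun_prop
    have i1 := sph_integrable hn1 ((hDv.continuousOn.comp hc.continuousOn (hmem r hr')).clm_apply hcid)
    have i2 := sph_integrable hn1 (((hDDv.comp hc.continuousOn (hmem r hr')).clm_apply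
      hcid).clm_apply hcid)
    simp only [Function.comp_def] at i1 i2
    have h0 := mean_lap hn1 hv hr.1.le hr.2
    have h1 : ∫ ζ, -(2 * r ^ 2 * fderiv ℝ (fderiv ℝ v) (r • ζ) ζ ζ
        + 2 * ((n : ℝ) - 1) * r * fderiv ℝ v (r • ζ) ζ) ∂(sphMeasure n) ≤ 0 := by
      rw [← h0]
      refine integral_mono_ae ((i2.const_mul _).add (i1.const_mul _)).neg ?_ ?_
      · have hlapc : ContinuousOn (fun x => lap v x) (uBall n) := by
          simp only [lap_eq]
          exact continuousOn_finsetSum _ fun i _ =>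
            (hDDv.clm_apply continuousOn_const).clm_apply continuousOn_const
        have hl' := hlapc.comp hc.continuousOn (hmem r hr')
        simp only [Function.comp_def] at hl'
        simp only [map_smul, smul_apply, smul_eq_mul]
        refine Integrable.sub (Integrable.sub (sph_integrable hn1 ?_) ?_) ?_
        · exact ContinuousOn.mul (by fun_prop) hl'
        · exact ((i2.const_mul r).const_mul r).const_mul 2
        · exact (i1.const_mul r).const_mul _
      · filter_upwards [sph_ae n] with ζ hζ
        have := hl _ (hmem r hr' ζ hζ)
        simp only [map_smul, smul_apply, smul_eq_mul]
        have h3 : 0 ≤ 2 * ‖r • ζ‖ ^ 2 * lap v (r • ζ) := by positivity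
        nlinarith
    rw [integral_neg, integral_add (i2.const_mul _) (i1.const_mul _), integral_const_mul,
      integral_const_mul] at h1
    have h2 : 0 ≤ 2 * r * (r * P' r + ((n : ℝ) - 1) * P r) := by
      simp only [hP, hP']; nlinarith
    exact nonneg_of_mul_nonneg_right h2 (by linarith [hr.1])
  have hPnn : ∀ r ∈ Ioo (0 : ℝ) 1, 0 ≤ P r := by
    intro r hr
    -- Equivalently `r^{n-1} P(r)` is nondecreasing; it vanishes at the origin because `n ≥ 2`.
    have hG : MonotoneOn (fun r => r ^ (n - 1) * P r) (Ico (0 : ℝ) 1) := by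
      have hd : ∀ r ∈ Ioo (-1 : ℝ) 1, HasDerivAt (fun r => r ^ (n - 1) * P r)
          (((n - 1 : ℕ) : ℝ) * r ^ (n - 1 - 1) * P r + r ^ (n - 1) * P' r) r :=
        fun r hr => (hasDerivAt_pow (n - 1) r).mul (hPd r hr)
      refine monotoneOn_of_deriv_nonneg (convex_Ico 0 1) (fun r hr =>
        (hd r ⟨by linarith [hr.1], hr.2⟩).continuousAt.continuousWithinAt) ?_ ?_
      · rw [interior_Ico]
        exact fun r hr => (hd r ⟨by linarith [hr.1], hr.2⟩).differentiableAt.differentiableWithinAt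
      · rw [interior_Ico]
        intro r hr
        rw [(hd r ⟨by linarith [hr.1], hr.2⟩).deriv]
        obtain ⟨m, rfl⟩ : ∃ m, n = m + 2 := ⟨n - 2, by omega⟩
        have h1 := key r hr
        have h2 : 0 ≤ r ^ m * (r * P' r + (((m + 2 : ℕ) : ℝ) - 1) * P r) :=
          mul_nonneg (pow_nonneg hr.1.le _) h1
        refine h2.trans_eq ?_
        simp only [show m + 2 - 1 = m + 1 by omega, show m + 1 - 1 = m by omega]
        push_cast; ring
    have h1 := hG (left_mem_Ico.2 one_pos) ⟨hr.1.le, hr.2⟩ hr.1.le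
    simp only [zero_pow (show n - 1 ≠ 0 by omega), zero_mul] at h1
    exact nonneg_of_mul_nonneg_right h1 (pow_pos hr.1 _)
  have hmono : MonotoneOn (fun r => ∫ ζ, v (r • ζ) ∂(sphMeasure n)) (Ico (0 : ℝ) 1) := by
    refine monotoneOn_of_deriv_nonneg (convex_Ico 0 1) (fun r hr =>
      (hm r ⟨by linarith [hr.1], hr.2⟩).continuousAt.continuousWithinAt) ?_ ?_
    · rw [interior_Ico]
      exact fun r hr => (hm r ⟨by linarith [hr.1], hr.2⟩).differentiableAt.differentiableWithinAt
    · rw [interior_Ico]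
      intro r hr
      rw [(hm r ⟨by linarith [hr.1], hr.2⟩).deriv]
      exact hPnn r hr
  exact hmono ⟨hr, by linarith⟩ ⟨by linarith, hs⟩ hrs

/-- The `p`-th spherical means of a harmonic function increase with the radius. -/
lemma hp_mean_mono {n : ℕ} (hn : 2 ≤ n) {h : Eucl n → ℂ} (hh : HarmOn h (uBall n))
    {p : ℝ} (hp : 1 ≤ p) {r s : ℝ} (hr : 0 ≤ r) (hrs : r ≤ s) (hs : s < 1) :
    ∫ ζ, ‖h (r • ζ)‖ ^ p ∂(sphMeasure n) ≤ ∫ ζ, ‖h (s • ζ)‖ ^ p ∂(sphMeasure n) := by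
  have hn1 : 1 ≤ n := by omega
  have hmem : ∀ r ∈ Ico (0 : ℝ) 1, ∀ ζ ∈ uSphere n, r • ζ ∈ uBall n := by
    intro r hr ζ hζ
    rw [mem_uBall, norm_smul, mem_uSphere.1 hζ, mul_one, Real.norm_of_nonneg hr.1]
    exact hr.2
  have hcont : ∀ r ∈ Ico (0 : ℝ) 1, Tendsto
      (fun ε => ∫ ζ, (‖h (r • ζ)‖ ^ 2 + ε) ^ (p / 2) ∂(sphMeasure n)) (𝓝[>] 0)
      (𝓝 (∫ ζ, ‖h (r • ζ)‖ ^ p ∂(sphMeasure n))) := by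
    intro r hr
    have hc : ContinuousOn (fun ζ : Eucl n => h (r • ζ)) (uSphere n) :=
      hh.1.continuousOn.comp (by fun_prop) (hmem r hr)
    have := sph_integral_cont hn1 (isCompact_Icc (a := (0 : ℝ)) (b := 1))
      (H := fun ε ζ => (‖h (r • ζ)‖ ^ 2 + ε) ^ (p / 2)) (by
        have h2 : ContinuousOn (fun q : ℝ × Eucl n => h (r • q.2)) (Icc (0 : ℝ) 1 ×ˢ uSphere n) :=
          hc.comp continuousOn_snd fun q hq => hq.2
        exact ((h2.norm.pow 2).add continuousOn_fst).rpow_const fun q hq => Or.inr (by positivity))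
    have h3 := this 0 (left_mem_Icc.2 zero_le_one)
    have h4 : ∀ z : ℂ, (‖z‖ ^ 2 + 0) ^ (p / 2) = ‖z‖ ^ p := by
      intro z
      rw [add_zero, ← Real.rpow_natCast, ← Real.rpow_mul (norm_nonneg _)]
      congr 1; push_cast; ring
    simp only [ContinuousWithinAt, h4] at h3
    refine h3.mono_left ?_
    rw [← nhdsWithin_Ioc_eq_nhdsGT (zero_lt_one (α := ℝ))]
    exact nhdsWithin_mono _ Ioc_subset_Icc_self
  refine le_of_tendsto_of_tendsto (hcont r ⟨hr, by linarith⟩) (hcont s ⟨by linarith, hs⟩) ?_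
  filter_upwards [self_mem_nhdsWithin] with ε hε
  refine mean_mono hn (v := fun x => (‖h x‖ ^ 2 + ε) ^ (p / 2)) (fun x hx => ?_) (fun x hx => ?_)
    hr hrs hs
  · have h1 := hh.contDiffAt (isOpen_uBall n) hx
    have hε' : (0 : ℝ) < ε := hε
    exact ((((h1.norm_sq ℝ).add contDiffAt_const).rpow_const_of_ne
      (by positivity)).contDiffWithinAt)
  · exact lap_comp_pow_nonneg (hh.contDiffAt (isOpen_uBall n) hx) (hh.2 x hx) hε (by linarith)

/-- For harmonic functions continuous up to the sphere, interior means are bounded by the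
boundary mean. -/
lemma hp_mean_le_boundary {n : ℕ} (hn : 2 ≤ n) {h : Eucl n → ℂ} (hh : HarmOn h (uBall n))
    (hc : ContinuousOn h (closedBall 0 1)) {p : ℝ} (hp : 1 ≤ p) {r : ℝ} (hr : 0 ≤ r) (hr1 : r < 1) :
    ∫ ζ, ‖h (r • ζ)‖ ^ p ∂(sphMeasure n) ≤ ∫ ζ, ‖h ζ‖ ^ p ∂(sphMeasure n) := by
  have hn1 : 1 ≤ n := by omega
  have := sph_integral_cont hn1 (isCompact_Icc (a := (0 : ℝ)) (b := 1))
    (H := fun s ζ => ‖h (s • ζ)‖ ^ p) (by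
      refine (ContinuousOn.norm (hc.comp (by fun_prop) fun q hq => ?_)).rpow_const
        fun q hq => Or.inr (by positivity)
      rw [mem_closedBall_zero_iff, norm_smul, mem_uSphere.1 hq.2, mul_one,
        Real.norm_of_nonneg hq.1.1]
      exact hq.1.2)
  have h3 := this 1 (right_mem_Icc.2 zero_le_one)
  simp only [ContinuousWithinAt, one_smul] at h3
  have h4 : Tendsto (fun s : ℝ => ∫ ζ, ‖h (s • ζ)‖ ^ p ∂(sphMeasure n)) (𝓝[<] 1)
      (𝓝 (∫ ζ, ‖h ζ‖ ^ p ∂(sphMeasure n))) := by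
    refine h3.mono_left ?_
    rw [← nhdsWithin_Ico_eq_nhdsLT (zero_lt_one (α := ℝ))]
    exact nhdsWithin_mono _ Ico_subset_Icc_self
  refine ge_of_tendsto h4 ?_
  filter_upwards [Ico_mem_nhdsLT hr1] with s hs
  exact hp_mean_mono hn hh hp hr hs.1 hs.2

/-! ### Inversions preserving the ball -/

/-- The conformal factor of the inversion `invI c` below. -/
noncomputable def invK {n : ℕ} (c x : Eucl n) : ℝ := (‖c‖ ^ 2 - 1) / ‖x - c‖ ^ 2

/-- Inversion in the sphere centred at `c` and orthogonal to the unit sphere (for `|c| > 1`). -/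
noncomputable def invI {n : ℕ} (c x : Eucl n) : Eucl n := c + invK c x • (x - c)

section inversion
variable {n : ℕ} {c : Eucl n}

lemma ne_of_norm_le (hc : 1 < ‖c‖) {x : Eucl n} (hx : ‖x‖ ≤ 1) : x ≠ c := by
  rintro rfl; linarith

lemma sub_norm_pos {x : Eucl n} (hx : x ≠ c) : 0 < ‖x - c‖ := norm_pos_iff.2 (sub_ne_zero.2 hx)

lemma rho_pos (hc : 1 < ‖c‖) : 0 < ‖c‖ ^ 2 - 1 := by nlinarith

lemma invK_pos (hc : 1 < ‖c‖) {x : Eucl n} (hx : x ≠ c) : 0 < invK c x :=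
  div_pos (rho_pos hc) (pow_pos (sub_norm_pos hx) 2)

lemma invK_mul {x : Eucl n} (hx : x ≠ c) : invK c x * ‖x - c‖ ^ 2 = ‖c‖ ^ 2 - 1 :=
  div_mul_cancel₀ _ (pow_pos (sub_norm_pos hx) 2).ne'

lemma invI_sub (x : Eucl n) : invI c x - c = invK c x • (x - c) := by simp [invI]

lemma invI_ne (hc : 1 < ‖c‖) {x : Eucl n} (hx : x ≠ c) : invI c x ≠ c := by
  intro h
  have h1 := invI_sub (c := c) x
  rw [h, sub_self] at h1
  exact (smul_ne_zero (invK_pos hc hx).ne' (sub_ne_zero.2 hx)) h1.symm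

lemma one_sub_invI (hx : x ≠ c) : 1 - ‖invI c x‖ ^ 2 = invK c x * (1 - ‖x‖ ^ 2) := by
  have h1 := invK_mul hx
  have h2 : ‖invI c x‖ ^ 2 = ‖c‖ ^ 2 + 2 * (invK c x * ⟪c, x - c⟫_ℝ)
      + invK c x ^ 2 * ‖x - c‖ ^ 2 := by
    rw [invI, norm_add_sq_real, real_inner_smul_right, norm_smul, mul_pow, Real.norm_eq_abs, sq_abs]
  have h3 : ‖x‖ ^ 2 = ‖c‖ ^ 2 + 2 * ⟪c, x - c⟫_ℝ + ‖x - c‖ ^ 2 := by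
    conv_lhs => rw [show x = c + (x - c) by abel, norm_add_sq_real]
  rw [h2, h3]
  linear_combination (-(invK c x) + 1) * h1

lemma invK_invI (hc : 1 < ‖c‖) {x : Eucl n} (hx : x ≠ c) : invK c (invI c x) = (invK c x)⁻¹ := by
  have h1 := invK_mul hx
  have h2 := (invK_pos hc hx).ne'
  have h3 := (sub_norm_pos hx).ne'
  rw [invK, invI_sub, norm_smul, mul_pow, Real.norm_eq_abs, sq_abs, ← h1]
  field_simp

lemma invI_invI (hc : 1 < ‖c‖) {x : Eucl n} (hx : x ≠ c) : invI c (invI c x) = x := by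
  rw [invI, invK_invI hc hx, invI_sub, smul_smul, inv_mul_cancel₀ (invK_pos hc hx).ne', one_smul]
  abel

lemma norm_invI_lt (hc : 1 < ‖c‖) {x : Eucl n} (hx : ‖x‖ < 1) : ‖invI c x‖ < 1 := by
  have h1 := one_sub_invI (ne_of_norm_le hc hx.le)
  have h2 := invK_pos hc (ne_of_norm_le hc hx.le)
  have h3 : 0 < invK c x * (1 - ‖x‖ ^ 2) := mul_pos h2 (by nlinarith [norm_nonneg x])
  nlinarith [norm_nonneg (invI c x)]

lemma norm_invI_eq (hc : 1 < ‖c‖) {x : Eucl n} (hx : ‖x‖ = 1) : ‖invI c x‖ = 1 := by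
  have h1 := one_sub_invI (ne_of_norm_le hc hx.le)
  rw [hx] at h1
  nlinarith [norm_nonneg (invI c x)]

lemma norm_invI_le (hc : 1 < ‖c‖) {x : Eucl n} (hx : ‖x‖ ≤ 1) : ‖invI c x‖ ≤ 1 := by
  rcases hx.lt_or_eq with h | h
  · exact (norm_invI_lt hc h).le
  · exact (norm_invI_eq hc h).le

/-- The two-point formula for an inversion. -/
lemma dist_invI {x y : Eucl n} (hx : x ≠ c) (hy : y ≠ c) :
    ‖invI c x - invI c y‖ ^ 2 = invK c x * invK c y * ‖x - y‖ ^ 2 := by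
  have h1 := invK_mul hx
  have h2 := invK_mul hy
  have h3 : invI c x - invI c y = invK c x • (x - c) - invK c y • (y - c) := by
    simp [invI]
  have h4 : x - y = (x - c) - (y - c) := by abel
  rw [h3, h4, norm_sub_sq_real, norm_sub_sq_real, norm_smul, norm_smul, mul_pow, mul_pow,
    Real.norm_eq_abs, Real.norm_eq_abs, sq_abs, sq_abs, real_inner_smul_left,
    real_inner_smul_right]
  linear_combination (invK c x - invK c y) * h1 + (invK c y - invK c x) * h2

/-- The distortion constant `(|c| + 1) / (|c| - 1)`. -/
noncomputable def invB (c : Eucl n) : ℝ := (‖c‖ + 1) / (‖c‖ - 1)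

lemma invB_gt (hc : 1 < ‖c‖) : 1 < invB c := by
  rw [invB, one_lt_div (by linarith)]; linarith

lemma invK_le (hc : 1 < ‖c‖) {x : Eucl n} (hx : ‖x‖ ≤ 1) : invK c x ≤ invB c := by
  have h1 : ‖c‖ - 1 ≤ ‖x - c‖ := by
    have := norm_sub_norm_le c x
    rw [norm_sub_rev] at this; linarith
  have h0 : 0 < ‖c‖ - 1 := by linarith
  have h3 := sub_norm_pos (ne_of_norm_le hc hx)
  rw [invK, invB, div_le_div_iff₀ (by positivity) h0]
  have h2 : (‖c‖ - 1) ^ 2 ≤ ‖x - c‖ ^ 2 := pow_le_pow_left₀ h0.le h1 2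
  nlinarith

lemma le_invK (hc : 1 < ‖c‖) {x : Eucl n} (hx : ‖x‖ ≤ 1) : (invB c)⁻¹ ≤ invK c x := by
  have h1 : ‖x - c‖ ≤ ‖c‖ + 1 := by
    have := norm_sub_le x c; linarith
  have h0 : 0 < ‖c‖ - 1 := by linarith
  have h3 := sub_norm_pos (ne_of_norm_le hc hx)
  rw [invK, invB, inv_div, div_le_div_iff₀ (by positivity) (by positivity)]
  have h2 : ‖x - c‖ ^ 2 ≤ (‖c‖ + 1) ^ 2 := pow_le_pow_left₀ (norm_nonneg _) h1 2
  nlinarith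

lemma continuousAt_invK {x : Eucl n} (hx : x ≠ c) : ContinuousAt (invK c) x := by
  have := (sub_norm_pos hx).ne'
  unfold invK
  exact ContinuousAt.div (by fun_prop) (by fun_prop) (by positivity)

lemma continuousAt_invI {x : Eucl n} (hx : x ≠ c) : ContinuousAt (invI c) x := by
  unfold invI
  exact continuousAt_const.add ((continuousAt_invK hx).smul (by fun_prop))

lemma continuousOn_invK (hc : 1 < ‖c‖) : ContinuousOn (invK c) (closedBall 0 1) := fun _ hx =>
  (continuousAt_invK (ne_of_norm_le hc (mem_closedBall_zero_iff.1 hx))).continuousWithinAt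

lemma continuousOn_invI (hc : 1 < ‖c‖) : ContinuousOn (invI c) (closedBall 0 1) := fun _ hx =>
  (continuousAt_invI (ne_of_norm_le hc (mem_closedBall_zero_iff.1 hx))).continuousWithinAt

lemma measurable_invK : Measurable (invK c) := by
  unfold invK
  exact measurable_const.div (((measurable_id.sub_const c).norm).pow_const 2)

lemma measurable_invI : Measurable (invI c) := by
  unfold invI
  exact measurable_const.add (measurable_invK.smul (measurable_id.sub_const c))

/-- On a set where the conformal factor is at most `K`, the inversion is `K`-Lipschitz, which
bounds the measure of images. -/
lemma sph_preimage_le (hn : 1 ≤ n) (hc : 1 < ‖c‖) {K : ℝ≥0} {E : Set (Eucl n)}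
    (hE : ∀ x ∈ E, invK c x ≤ K) :
    sphMeasure n (invI c ⁻¹' E) ≤ (K : ℝ≥0∞) ^ ((n : ℝ) - 1) * sphMeasure n E := by
  have hS := measurableSet_uSphere n
  have hd : (0 : ℝ) ≤ (n : ℝ) - 1 := by
    have : (1 : ℝ) ≤ n := by exact_mod_cast hn
    linarith
  simp only [sphMeasure, Measure.smul_apply, Measure.restrict_apply' hS, smul_eq_mul]
  rw [mul_left_comm]
  gcongr
  have hsub : invI c ⁻¹' E ∩ uSphere n ⊆ invI c '' (E ∩ uSphere n) := by
    rintro x ⟨hx1, hx2⟩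
    rw [mem_uSphere] at hx2
    exact ⟨invI c x, ⟨hx1, mem_uSphere.2 (norm_invI_eq hc hx2)⟩,
      invI_invI hc (ne_of_norm_le hc hx2.le)⟩
  refine (measure_mono hsub).trans (LipschitzOnWith.hausdorffMeasure_image_le ?_ hd)
  refine LipschitzOnWith.of_dist_le_mul fun x hx y hy => ?_
  have hx' := ne_of_norm_le hc (mem_uSphere.1 hx.2).le
  have hy' := ne_of_norm_le hc (mem_uSphere.1 hy.2).le
  rw [dist_eq_norm, dist_eq_norm]
  refine abs_le_of_sq_le_sq' ?_ (by positivity) |>.2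
  rw [dist_invI hx' hy', mul_pow]
  gcongr
  rw [sq]
  exact mul_le_mul (hE x hx.1) (hE y hy.1) (invK_pos hc hy').le K.2

/-- One half of the change of variables formula: the image of `σ` under the inversion is at most
`k^{n-1} σ`. The crude bound `sph_preimage_le` is summed over pieces on which the conformal factor
is constant up to a ratio `exp ε`, and then `ε → 0`. -/
lemma sph_map_le (hn : 1 ≤ n) (hc : 1 < ‖c‖) :
    (sphMeasure n).map (invI c) ≤
      (sphMeasure n).withDensity fun x => ENNReal.ofReal (invK c x ^ ((n : ℝ) - 1)) := by
  have hprob : IsProbabilityMeasure (sphMeasure n) := sphMeasure_prob hn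
  have hd : (0 : ℝ) ≤ (n : ℝ) - 1 := by
    have : (1 : ℝ) ≤ n := by exact_mod_cast hn
    linarith
  set d := (n : ℝ) - 1 with hd'
  have hk : Measurable fun x : Eucl n => ENNReal.ofReal (invK c x ^ d) :=
    (measurable_invK.pow_const d).ennreal_ofReal
  refine Measure.le_iff.2 fun E hE => ?_
  rw [Measure.map_apply measurable_invI hE, withDensity_apply _ hE]
  -- Split according to the value of the conformal factor, up to a ratio `exp ε`.
  have step : ∀ ε : ℝ, 0 < ε → sphMeasure n (invI c ⁻¹' E) ≤
      ENNReal.ofReal (Real.exp ε ^ d) * ∫⁻ x in E, ENNReal.ofReal (invK c x ^ d) ∂(sphMeasure n) := by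
    intro ε hε
    let J : Eucl n → ℤ := fun x => ⌊Real.log (invK c x) / ε⌋
    have hJ : Measurable J := ((Real.measurable_log.comp measurable_invK).div_const ε).floor
    let A : ℤ → Set (Eucl n) := fun j => E ∩ (J ⁻¹' {j} ∩ {c}ᶜ)
    have hAm : ∀ j, MeasurableSet (A j) := fun j =>
      hE.inter ((hJ (measurableSet_singleton j)).inter (measurableSet_singleton c).compl)
    have hcap : sphMeasure n (invI c ⁻¹' E) ≤ sphMeasure n (⋃ j, invI c ⁻¹' A j) := by
      refine measure_mono_ae ?_
      filter_upwards [sph_ae n] with x hx hxE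
      refine mem_iUnion.2 ⟨J (invI c x), hxE, rfl, ?_⟩
      exact ne_of_norm_le hc (norm_invI_eq hc (mem_uSphere.1 hx)).le
    have hAj : ∀ j, sphMeasure n (invI c ⁻¹' A j) ≤
        ENNReal.ofReal (Real.exp ε ^ d) *
          ∫⁻ x in A j, ENNReal.ofReal (invK c x ^ d) ∂(sphMeasure n) := by
      intro j
      have hb : ∀ x ∈ A j, invK c x ≤ Real.exp (ε * (j + 1)) ∧
          Real.exp (ε * (j + 1)) ≤ Real.exp ε * invK c x := by
        rintro x ⟨_, hx, hxc⟩
        have hxj : J x = j := hx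
        have hpos := invK_pos hc hxc
        have h1 := Int.floor_le (Real.log (invK c x) / ε)
        have h2 := Int.lt_floor_add_one (Real.log (invK c x) / ε)
        rw [show ⌊Real.log (invK c x) / ε⌋ = j from hxj] at h1 h2
        rw [le_div_iff₀ hε] at h1
        rw [div_lt_iff₀ hε] at h2
        have h3 := Real.exp_log hpos
        constructor
        · rw [← h3]; exact Real.exp_le_exp.2 (by nlinarith)
        · rw [← h3, ← Real.exp_add]; exact Real.exp_le_exp.2 (by nlinarith)
      let K : ℝ≥0 := ⟨Real.exp (ε * (j + 1)), (Real.exp_pos _).le⟩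
      refine (sph_preimage_le hn hc (K := K) fun x hx => (hb x hx).1).trans ?_
      rw [← lintegral_const_mul _ hk, ← setLIntegral_const]
      refine setLIntegral_mono' (hAm j) fun x hx => ?_
      have hpos := invK_pos hc hx.2.2
      rw [← ENNReal.ofReal_mul (by positivity), ← Real.mul_rpow (by positivity) hpos.le]
      have : (K : ℝ≥0∞) = ENNReal.ofReal (Real.exp (ε * (j + 1))) := by
        rw [← ENNReal.ofReal_coe_nnreal]; rfl
      rw [this, ENNReal.ofReal_rpow_of_nonneg (by positivity) hd]
      exact ENNReal.ofReal_le_ofReal (Real.rpow_le_rpow (by positivity) (hb x hx).2 hd)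
    have hdisj : Pairwise (Function.onFun Disjoint A) := by
      intro i j hij
      refine Set.disjoint_left.2 fun x hx hy => hij ?_
      exact (show J x = i from hx.2.1).symm.trans hy.2.1
    calc _ ≤ _ := hcap
      _ ≤ ∑' j, sphMeasure n (invI c ⁻¹' A j) := measure_iUnion_le _
      _ ≤ ∑' j, ENNReal.ofReal (Real.exp ε ^ d) *
          ∫⁻ x in A j, ENNReal.ofReal (invK c x ^ d) ∂(sphMeasure n) := ENNReal.tsum_le_tsum hAj
      _ = ENNReal.ofReal (Real.exp ε ^ d) *
          ∫⁻ x in ⋃ j, A j, ENNReal.ofReal (invK c x ^ d) ∂(sphMeasure n) := by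
        rw [ENNReal.tsum_mul_left, lintegral_iUnion hAm hdisj]
      _ ≤ _ := by
        gcongr
        exact iUnion_subset fun j => inter_subset_left
  have hlim : Tendsto (fun ε : ℝ => ENNReal.ofReal (Real.exp ε ^ d) *
      ∫⁻ x in E, ENNReal.ofReal (invK c x ^ d) ∂(sphMeasure n)) (𝓝[>] 0)
      (𝓝 (ENNReal.ofReal (Real.exp 0 ^ d) *
        ∫⁻ x in E, ENNReal.ofReal (invK c x ^ d) ∂(sphMeasure n))) := by
    refine ENNReal.Tendsto.mul_const ?_ (Or.inl ?_)
    · refine ENNReal.tendsto_ofReal (Tendsto.mono_left ?_ nhdsWithin_le_nhds)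
      exact ((Real.continuous_exp.tendsto 0).rpow_const (Or.inl (Real.exp_pos 0).ne'))
    · simp
  have := ge_of_tendsto hlim (by filter_upwards [self_mem_nhdsWithin] with ε hε using step ε hε)
  simpa using this

lemma sphere_sub_closedBall : uSphere n ⊆ closedBall 0 1 := sphere_subset_closedBall

lemma mapsTo_invI (hc : 1 < ‖c‖) : MapsTo (invI c) (uSphere n) (uSphere n) := fun _ hx =>
  mem_uSphere.2 (norm_invI_eq hc (mem_uSphere.1 hx))

lemma sph_integral_invI_le (hn : 1 ≤ n) (hc : 1 < ‖c‖) {G : Eucl n → ℝ}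
    (hG : ContinuousOn G (uSphere n)) (h0 : ∀ x ∈ uSphere n, 0 ≤ G x) :
    ∫ ζ, G (invI c ζ) ∂(sphMeasure n) ≤
      ∫ ζ, invK c ζ ^ ((n : ℝ) - 1) * G ζ ∂(sphMeasure n) := by
  have hprob : IsProbabilityMeasure (sphMeasure n) := sphMeasure_prob hn
  have hle := sph_map_le hn hc
  set d := (n : ℝ) - 1
  have hk : Measurable fun x : Eucl n => ENNReal.ofReal (invK c x ^ d) :=
    (measurable_invK.pow_const d).ennreal_ofReal
  have hac : (sphMeasure n).withDensity (fun x => ENNReal.ofReal (invK c x ^ d)) ≪ sphMeasure n :=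
    withDensity_absolutelyContinuous _ _
  have hkpos : ∀ x : Eucl n, x ∈ uSphere n → 0 < invK c x := fun x hx =>
    invK_pos hc (ne_of_norm_le hc (mem_uSphere.1 hx).le)
  have hkc : ContinuousOn (fun x => invK c x ^ d) (uSphere n) :=
    ((continuousOn_invK hc).mono sphere_sub_closedBall).rpow_const fun x hx =>
      Or.inl (hkpos x hx).ne'
  have htr : ∀ᵐ ζ ∂(sphMeasure n), (ENNReal.ofReal (invK c ζ ^ d)).toReal • G ζ
      = invK c ζ ^ d * G ζ := by
    filter_upwards [sph_ae n] with ζ hζ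
    rw [ENNReal.toReal_ofReal (Real.rpow_nonneg (hkpos ζ hζ).le _), smul_eq_mul]
  have hfin : ∀ᵐ ζ ∂(sphMeasure n), ENNReal.ofReal (invK c ζ ^ d) < ⊤ := by simp
  rw [← integral_map (f := G) measurable_invI.aemeasurable
    (((sph_aesm hG).mono_ac hac).mono_measure hle), ← integral_congr_ae htr,
    ← integral_withDensity_eq_integral_toReal_smul hk hfin]
  refine integral_mono_measure hle (hac.ae_le ((sph_ae n).mono h0)) ?_
  rw [integrable_withDensity_iff_integrable_smul' hk hfin]
  exact (sph_integrable hn (hkc.mul hG)).congr (htr.mono fun _ h => h.symm)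

/-- Change of variables on the sphere under an inversion preserving it. -/
lemma sph_integral_invI (hn : 1 ≤ n) (hc : 1 < ‖c‖) {G : Eucl n → ℝ}
    (hG : ContinuousOn G (uSphere n)) (h0 : ∀ x ∈ uSphere n, 0 ≤ G x) :
    ∫ ζ, G (invI c ζ) ∂(sphMeasure n) =
      ∫ ζ, invK c ζ ^ ((n : ℝ) - 1) * G ζ ∂(sphMeasure n) := by
  refine le_antisymm (sph_integral_invI_le hn hc hG h0) ?_
  set d := (n : ℝ) - 1
  have hkpos : ∀ x : Eucl n, x ∈ uSphere n → 0 < invK c x := fun x hx =>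
    invK_pos hc (ne_of_norm_le hc (mem_uSphere.1 hx).le)
  have hkc : ContinuousOn (fun x => invK c x ^ d) (uSphere n) :=
    ((continuousOn_invK hc).mono sphere_sub_closedBall).rpow_const fun x hx =>
      Or.inl (hkpos x hx).ne'
  have hIc : ContinuousOn (invI c) (uSphere n) := (continuousOn_invI hc).mono sphere_sub_closedBall
  have hM := mapsTo_invI hc
  have h1 := sph_integral_invI_le hn hc
    (G := fun x => invK c (invI c x) ^ d * G (invI c x))
    ((hkc.comp hIc hM).mul (hG.comp hIc hM))
    (fun x hx => mul_nonneg (Real.rpow_nonneg (hkpos _ (hM hx)).le _) (h0 _ (hM hx)))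
  refine (le_of_eq ?_).trans (h1.trans (le_of_eq ?_))
  · refine integral_congr_ae ?_
    filter_upwards [sph_ae n] with ζ hζ
    rw [invI_invI hc (ne_of_norm_le hc (mem_uSphere.1 hζ).le)]
  · refine integral_congr_ae ?_
    filter_upwards [sph_ae n] with ζ hζ
    have hp := hkpos ζ hζ
    rw [invK_invI hc (ne_of_norm_le hc (mem_uSphere.1 hζ).le), ← mul_assoc,
      ← Real.mul_rpow hp.le (inv_nonneg.2 hp.le), mul_inv_cancel₀ hp.ne', Real.one_rpow, one_mul]

end inversion

/-! ### The Kelvin transform -/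

section kelvin
variable {n : ℕ} {c : Eucl n} {F : Type*} [NormedAddCommGroup F] [NormedSpace ℝ F]

lemma lap_smul {u : Eucl n → ℝ} {g : Eucl n → F} {x : Eucl n} (hu : ContDiffAt ℝ 2 u x)
    (hg : ContDiffAt ℝ 2 g x) :
    lap (fun y => u y • g y) x = u x • lap g x
      + (2 : ℝ) • fderiv ℝ g x (∑ i, fderiv ℝ u x (basisV n i) • basisV n i) + lap u x • g x := by
  simp only [lap_eq, hess_smul hu hg, Finset.sum_add_distrib, map_sum, map_smul,
    Finset.smul_sum, Finset.sum_smul, smul_smul]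

lemma lap_comp {g : F → ℂ} {h : Eucl n → F} {x : Eucl n} (hg : ContDiffAt ℝ 2 g (h x))
    (hh : ContDiffAt ℝ 2 h x) :
    lap (fun y => g (h y)) x = ∑ i, fderiv ℝ (fderiv ℝ g) (h x) (fderiv ℝ h x (basisV n i))
      (fderiv ℝ h x (basisV n i)) + fderiv ℝ g (h x) (lap h x) := by
  simp only [lap_eq, hess_comp hg hh, Finset.sum_add_distrib, map_sum]

lemma lap_const (a : F) (x : Eucl n) : lap (fun _ => a) x = 0 := by
  simp [lap_eq]

lemma lap_sub_const (x : Eucl n) : lap (fun y => y - c) x = 0 := by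
  have : fderiv ℝ (fun y : Eucl n => y - c) = fun _ => ContinuousLinearMap.id ℝ _ := by
    funext y; rw [fderiv_sub_const]; exact fderiv_id
  simp [lap_eq, this]

lemma fderiv_npow {a s : ℝ} {x : Eucl n} (hx : x ≠ c) :
    HasFDerivAt (fun y => a * (‖y - c‖ ^ 2 + 0) ^ s)
      (a • (2 * s * (‖x - c‖ ^ 2 + 0) ^ (s - 1)) • innerSL ℝ (x - c)) x := by
  have h := sub_norm_pos hx
  exact (hasFDerivAt_npow c 0 s (by positivity)).const_mul a

lemma grad_npow {a s : ℝ} {x : Eucl n} (hx : x ≠ c) :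
    ∑ i, fderiv ℝ (fun y => a * (‖y - c‖ ^ 2 + 0) ^ s) x (basisV n i) • basisV n i
      = (a * (2 * s * (‖x - c‖ ^ 2 + 0) ^ (s - 1))) • (x - c) := by
  rw [(fderiv_npow hx).fderiv]
  have : ∀ i, innerSL ℝ (x - c) (basisV n i) = (x - c) i := fun i => by
    rw [innerSL_apply_apply, real_inner_comm, inner_basisV_left]
  conv_rhs => enter [2]; rw [← sum_basisV (x - c)]
  rw [Finset.smul_sum]
  refine Finset.sum_congr rfl fun i _ => ?_
  simp only [smul_apply, this, smul_eq_mul, smul_smul]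

lemma contDiffAt_npow' {a s : ℝ} {x : Eucl n} (hx : x ≠ c) :
    ContDiffAt ℝ 2 (fun y => a * (‖y - c‖ ^ 2 + 0) ^ s) x := by
  have h := sub_norm_pos hx
  exact contDiffAt_const.mul (contDiffAt_npow c 0 s (by positivity))

lemma lap_npow {a s : ℝ} {x : Eucl n} (hx : x ≠ c) :
    lap (fun y => a * (‖y - c‖ ^ 2 + 0) ^ s) x
      = a * (2 * s * (n + 2 * s - 2) * (‖x - c‖ ^ 2 + 0) ^ (s - 1)) := by
  have h := sub_norm_pos hx
  have hp : 0 < ‖x - c‖ ^ 2 + 0 := by positivity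
  have h1 := lap_smul (u := fun _ => a) (g := fun y => (‖y - c‖ ^ 2 + 0) ^ s) (x := x)
    contDiffAt_const (contDiffAt_npow c 0 s hp)
  rw [lap_const] at h1
  simp only [smul_eq_mul, fderiv_fun_const, zero_apply, zero_smul, Finset.sum_const_zero, map_zero,
    mul_zero, zero_mul, add_zero, Pi.zero_apply] at h1
  simp only [add_zero]
  rw [h1, lap_eq]
  have h2 := fun w => hess_npow c 0 s hp w
  simp only [add_zero] at h2
  have h3 : ∑ i, ⟪x - c, basisV n i⟫_ℝ ^ 2 = ‖x - c‖ ^ 2 := by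
    rw [EuclideanSpace.real_norm_sq_eq]
    exact Finset.sum_congr rfl fun i _ => by rw [real_inner_comm, inner_basisV_left]
  simp only [h2, Finset.sum_add_distrib, basisV_norm, ← Finset.mul_sum, h3]
  have h4 : (‖x - c‖ ^ 2) ^ (s - 1) = (‖x - c‖ ^ 2) ^ (s - 2) * ‖x - c‖ ^ 2 := by
    rw [← Real.rpow_add_one (by positivity)]; congr 1; ring
  simp only [Finset.sum_const, Finset.card_univ, Fintype.card_fin, nsmul_eq_mul, h4]
  ring

lemma invK_eq : invK c = fun y => (‖c‖ ^ 2 - 1) * (‖y - c‖ ^ 2 + 0) ^ (-1 : ℝ) := by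
  funext y
  rw [invK, Real.rpow_neg_one, add_zero, div_eq_mul_inv]

lemma invK_rpow (hc : 1 < ‖c‖) (m : ℝ) (y : Eucl n) :
    invK c y ^ m = (‖c‖ ^ 2 - 1) ^ m * (‖y - c‖ ^ 2 + 0) ^ (-m) := by
  rw [invK, add_zero, Real.div_rpow (rho_pos hc).le (by positivity), Real.rpow_neg (by positivity),
    div_eq_mul_inv]

lemma contDiffAt_invK {x : Eucl n} (hx : x ≠ c) : ContDiffAt ℝ 2 (invK c) x := by
  rw [invK_eq]; exact contDiffAt_npow' hx

lemma contDiffAt_invI {x : Eucl n} (hx : x ≠ c) : ContDiffAt ℝ 2 (invI c) x := by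
  have := contDiffAt_invK hx
  unfold invI
  fun_prop

lemma hasFDerivAt_invI (hc : 1 < ‖c‖) {x : Eucl n} (hx : x ≠ c) :
    HasFDerivAt (invI c)
      (invK c x • ((ℝ ∙ (x - c))ᗮ.reflection : Eucl n →L[ℝ] Eucl n)) x := by
  have h := EuclideanGeometry.hasFDerivAt_inversion (c := c) (R := √(‖c‖ ^ 2 - 1)) hx
  have e : ∀ y : Eucl n, (√(‖c‖ ^ 2 - 1) / dist y c) ^ 2 = invK c y := fun y => by
    rw [div_pow, Real.sq_sqrt (rho_pos hc).le, dist_eq_norm, invK]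
  have e2 : EuclideanGeometry.inversion c √(‖c‖ ^ 2 - 1) = invI c := by
    funext y
    rw [EuclideanGeometry.inversion, e, invI, vsub_eq_sub, vadd_eq_add, add_comm]
  rw [e2, e] at h
  exact h

lemma lap_invI {x : Eucl n} (hx : x ≠ c) :
    lap (invI c) x
      = ((‖c‖ ^ 2 - 1) * (4 - 2 * n) * (‖x - c‖ ^ 2 + 0) ^ (-1 - 1 : ℝ)) • (x - c) := by
  have h0 : lap (invI c) x = lap (fun y => invK c y • (y - c)) x := by
    have : fderiv ℝ (invI c) = fderiv ℝ (fun y => invK c y • (y - c)) := by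
      funext y; exact fderiv_const_add _
    rw [lap_eq, lap_eq, this]
  rw [h0, lap_smul (contDiffAt_invK hx) (by fun_prop), lap_sub_const, fderiv_sub_const, invK_eq,
    grad_npow hx, lap_npow hx, show fderiv ℝ (fun y : Eucl n => y) x = ContinuousLinearMap.id ℝ _ from
      fderiv_id]
  simp only [smul_zero, zero_add, ContinuousLinearMap.id_apply]
  module

/-- The Kelvin transform, normalized for the inversion `invI c`. -/
noncomputable def kelvin (c : Eucl n) (f : Eucl n → ℂ) (x : Eucl n) : ℂ :=
  (invK c x ^ (((n : ℝ) - 2) / 2)) • f (invI c x)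

lemma kelvin_eq (hc : 1 < ‖c‖) (f : Eucl n → ℂ) : kelvin c f = fun y =>
    ((‖c‖ ^ 2 - 1) ^ (((n : ℝ) - 2) / 2) * (‖y - c‖ ^ 2 + 0) ^ (-(((n : ℝ) - 2) / 2))) •
      f (invI c y) := by
  funext y; rw [kelvin, invK_rpow hc]

lemma contDiffAt_kelvin (hc : 1 < ‖c‖) {f : Eucl n → ℂ} {x : Eucl n} (hx : x ≠ c)
    (hf : ContDiffAt ℝ 2 f (invI c x)) : ContDiffAt ℝ 2 (kelvin c f) x := by
  rw [kelvin_eq hc]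
  exact (contDiffAt_npow' hx).smul (hf.comp x (contDiffAt_invI hx))

/-- Covariance of the Laplacian under the Kelvin transform: the cross term between the weight and
`f ∘ I` cancels the term coming from the Laplacian of the inversion. -/
lemma lap_kelvin (hc : 1 < ‖c‖) {f : Eucl n → ℂ} {x : Eucl n} (hx : x ≠ c)
    (hf : ContDiffAt ℝ 2 f (invI c x)) (hl : lap f (invI c x) = 0) : lap (kelvin c f) x = 0 := by
  have hI := contDiffAt_invI hx
  have hD := hasFDerivAt_invI hc hx
  have hpos := sub_norm_pos hx
  have hfd : fderiv ℝ (fun y => f (invI c y)) x (x - c)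
      = (-invK c x) • fderiv ℝ f (invI c x) (x - c) := by
    have h1 : HasFDerivAt f (fderiv ℝ f (invI c x)) (invI c x) :=
      (hf.differentiableAt (by norm_num)).hasFDerivAt
    have h2 := h1.comp x hD
    rw [Function.comp_def] at h2
    rw [h2.fderiv]
    have : (ℝ ∙ (x - c))ᗮ.reflection (x - c) = -(x - c) :=
      Submodule.reflection_orthogonalComplement_singleton_eq_neg (x - c)
    change fderiv ℝ f (invI c x) (invK c x • (ℝ ∙ (x - c))ᗮ.reflection (x - c)) = _
    rw [this, smul_neg, map_neg, map_smul, neg_smul]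
  rw [kelvin_eq hc, lap_smul (g := fun y => f (invI c y)) (contDiffAt_npow' hx)
    (hf.comp x hI), lap_npow hx, grad_npow hx,
    lap_comp hf hI, map_smul, hfd, hD.fderiv, lap_invI hx]
  have hsum : ∑ i, fderiv ℝ (fderiv ℝ f) (invI c x)
      ((invK c x • ((ℝ ∙ (x - c))ᗮ.reflection : Eucl n →L[ℝ] Eucl n)) (basisV n i))
      ((invK c x • ((ℝ ∙ (x - c))ᗮ.reflection : Eucl n →L[ℝ] Eucl n)) (basisV n i)) = 0 := by
    have := lap_eq_isometry f (invI c x) ((ℝ ∙ (x - c))ᗮ.reflection)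
    rw [hl] at this
    have h2 : ∀ w : Eucl n, (invK c x • ((ℝ ∙ (x - c))ᗮ.reflection : Eucl n →L[ℝ] Eucl n)) w
      = invK c x • (ℝ ∙ (x - c))ᗮ.reflection w := fun w => rfl
    simp only [h2, map_smul, smul_apply, ← Finset.smul_sum, this, smul_zero]
  rw [hsum, zero_add, map_smul]
  have hN : ‖x - c‖ ^ 2 + 0 ≠ 0 := by positivity
  rw [Real.rpow_sub_one hN, Real.rpow_sub_one hN, invK_eq]
  simp only [smul_smul, ← add_smul]
  rw [show ((2 : ℝ) * (-(((n : ℝ) - 2) / 2)) * (n + 2 * (-(((n : ℝ) - 2) / 2)) - 2)) = 0 by ring]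
  simp only [zero_mul, mul_zero, zero_smul, add_zero]
  convert zero_smul ℝ _ using 2
  field_simp
  ring

lemma harmOn_kelvin (hc : 1 < ‖c‖) {f : Eucl n → ℂ} (hf : HarmOn f (uBall n)) :
    HarmOn (kelvin c f) (uBall n) := by
  refine ⟨fun x hx => ?_, fun x hx => ?_⟩
  all_goals
    have hx' := mem_uBall.1 hx
    have h1 := ne_of_norm_le hc hx'.le
    have h2 : invI c x ∈ uBall n := mem_uBall.2 (norm_invI_lt hc hx')
    have h3 := hf.contDiffAt (isOpen_uBall n) h2
  · exact (contDiffAt_kelvin hc h1 h3).contDiffWithinAt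
  · exact lap_kelvin hc h1 h3 (hf.2 _ h2)

/-- Rotations and dilations preserve harmonicity. -/
lemma harmOn_dilate {f : Eucl n → ℂ} (hf : HarmOn f (uBall n)) (A : Eucl n ≃ₗᵢ[ℝ] Eucl n)
    (t : ℝ) {s : Set (Eucl n)} (hs : ∀ x ∈ s, t • A x ∈ uBall n) :
    HarmOn (fun x => f (t • A x)) s := by
  let T : Eucl n →L[ℝ] Eucl n := t • (A : Eucl n →L[ℝ] Eucl n)
  have hT : ∀ x, T x = t • A x := fun x => rfl
  have hfT : ∀ x ∈ s, ContDiffAt ℝ 2 f (T x) := fun x hx =>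
    hf.contDiffAt (isOpen_uBall n) (hs x hx)
  simp only [← hT]
  refine ⟨fun x hx => ((hfT x hx).comp x T.contDiff.contDiffAt).contDiffWithinAt, fun x hx => ?_⟩
  have hlT : lap T x = 0 := by
    have : fderiv ℝ T = fun _ => T := by funext y; exact T.fderiv
    simp [lap_eq, this]
  rw [lap_comp (hfT x hx) T.contDiff.contDiffAt, hlT, T.fderiv, map_zero, add_zero]
  simp only [hT, map_smul, smul_apply, ← Finset.smul_sum]
  rw [← hT x, lap_eq_isometry, hT x, hf.2 _ (hs x hx), smul_zero, smul_zero]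

end kelvin

/-! ### Norm bounds and concentration on the sphere -/

section hardy
variable {n : ℕ}

lemma smul_sphere_mem {r : ℝ} (hr : r ∈ Ico (0 : ℝ) 1) {ζ : Eucl n} (hζ : ζ ∈ uSphere n) :
    r • ζ ∈ uBall n := by
  rw [mem_uBall, norm_smul, mem_uSphere.1 hζ, mul_one, Real.norm_of_nonneg hr.1]
  exact hr.2

lemma hpNormSet_congr {q : ℝ} {f g : Eucl n → ℂ} (h : ∀ x ∈ uBall n, f x = g x) :
    hpNormSet n q f = hpNormSet n q g := by
  refine image_congr fun r hr => ?_
  have : ∫ ζ, ‖f (r • ζ)‖ ^ q ∂(sphMeasure n) = ∫ ζ, ‖g (r • ζ)‖ ^ q ∂(sphMeasure n) := by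
    refine integral_congr_ae ?_
    filter_upwards [sph_ae n] with ζ hζ
    rw [h _ (smul_sphere_mem hr hζ)]
  simp only [this]

lemma hInfSet_congr {f g : Eucl n → ℂ} (h : ∀ x ∈ uBall n, f x = g x) :
    hInfSet n f = hInfSet n g :=
  image_congr fun x hx => by rw [h x hx]

lemma hpNorm_congr {p : ℝ≥0∞} {f g : Eucl n → ℂ} (h : ∀ x ∈ uBall n, f x = g x) :
    hpNorm n p f = hpNorm n p g := by
  rw [hpNorm, hpNorm, hpNormSet_congr h, hInfSet_congr h]

lemma MemHp.congr {p : ℝ≥0∞} {f g : Eucl n → ℂ} (hf : MemHp n p f)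
    (h : ∀ x ∈ uBall n, g x = f x) : MemHp n p g := by
  refine ⟨hf.1.congr (isOpen_uBall n) h, ?_⟩
  rw [hpNormSet_congr h, hInfSet_congr h]
  exact hf.2

lemma hpNormSet_rot {q : ℝ} (f : Eucl n → ℂ) (A : Eucl n ≃ₗᵢ[ℝ] Eucl n) :
    hpNormSet n q (fun x => f (A x)) = hpNormSet n q f := by
  refine image_congr fun r _ => ?_
  have := sph_integral_comp A (fun ζ => ‖f (r • ζ)‖ ^ q)
  simp only [map_smul, this]

lemma hInfSet_rot (f : Eucl n → ℂ) (A : Eucl n ≃ₗᵢ[ℝ] Eucl n) :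
    hInfSet n (fun x => f (A x)) = hInfSet n f := by
  ext y; constructor
  · rintro ⟨x, hx, rfl⟩
    exact ⟨A x, by rw [mem_uBall, A.norm_map]; exact mem_uBall.1 hx, rfl⟩
  · rintro ⟨x, hx, rfl⟩
    exact ⟨A.symm x, by rw [mem_uBall, A.symm.norm_map]; exact mem_uBall.1 hx, by simp⟩

lemma hpNorm_rot {p : ℝ≥0∞} (f : Eucl n → ℂ) (A : Eucl n ≃ₗᵢ[ℝ] Eucl n) :
    hpNorm n p (fun x => f (A x)) = hpNorm n p f := by
  rw [hpNorm, hpNorm, hpNormSet_rot, hInfSet_rot]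

lemma MemHp.rot {p : ℝ≥0∞} {f : Eucl n → ℂ} (hf : MemHp n p f) (A : Eucl n ≃ₗᵢ[ℝ] Eucl n) :
    MemHp n p (fun x => f (A x)) := by
  refine ⟨?_, ?_⟩
  · have := harmOn_dilate hf.1 A 1 (s := uBall n) fun x hx => by
      rw [one_smul, mem_uBall, A.norm_map]; exact mem_uBall.1 hx
    simpa only [one_smul] using this
  · rw [hpNormSet_rot, hInfSet_rot]; exact hf.2

lemma hpNorm_nonneg (p : ℝ≥0∞) (f : Eucl n → ℂ) : 0 ≤ hpNorm n p f := by
  rw [hpNorm]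
  split_ifs
  · refine Real.sSup_nonneg ?_
    rintro _ ⟨x, -, rfl⟩; exact norm_nonneg _
  · refine Real.sSup_nonneg ?_
    rintro _ ⟨r, -, rfl⟩
    exact Real.rpow_nonneg (integral_nonneg fun ζ => by positivity) _

lemma integral_pow_nonneg (q : ℝ) (f : Eucl n → ℂ) (r : ℝ) :
    0 ≤ ∫ ζ, ‖f (r • ζ)‖ ^ q ∂(sphMeasure n) := integral_nonneg fun ζ => by positivity

lemma le_of_mem_hpNormSet {q : ℝ} (hq : 1 ≤ q) {f : Eucl n → ℂ} {D : ℝ} (hD : 0 ≤ D)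
    (h : ∀ r ∈ Ico (0 : ℝ) 1, ∫ ζ, ‖f (r • ζ)‖ ^ q ∂(sphMeasure n) ≤ D ^ q) :
    ∀ y ∈ hpNormSet n q f, y ≤ D := by
  rintro _ ⟨r, hr, rfl⟩
  have := Real.rpow_le_rpow (integral_pow_nonneg q f r) (h r hr) (by positivity : 0 ≤ 1 / q)
  rwa [one_div, Real.rpow_rpow_inv hD (by positivity), ← one_div] at this

lemma mean_le_of_bddAbove {q : ℝ} (hq : 1 ≤ q) {f : Eucl n → ℂ} (h : BddAbove (hpNormSet n q f))
    {r : ℝ} (hr : r ∈ Ico (0 : ℝ) 1) :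
    ∫ ζ, ‖f (r • ζ)‖ ^ q ∂(sphMeasure n) ≤ sSup (hpNormSet n q f) ^ q := by
  have h1 : (∫ ζ, ‖f (r • ζ)‖ ^ q ∂(sphMeasure n)) ^ (1 / q) ≤ sSup (hpNormSet n q f) :=
    le_csSup h ⟨r, hr, rfl⟩
  have := Real.rpow_le_rpow (Real.rpow_nonneg (integral_pow_nonneg q f r) _) h1
    (by positivity : 0 ≤ q)
  rwa [one_div, Real.rpow_inv_rpow (integral_pow_nonneg q f r) (by positivity)] at this

lemma hpNormSet_nonempty (q : ℝ) (f : Eucl n → ℂ) : (hpNormSet n q f).Nonempty :=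
  ⟨_, 0, ⟨le_rfl, one_pos⟩, rfl⟩

/-- The operator norm is an infimum, so it is the least admissible constant as soon as there is
one. -/
lemma opNorm_eq {p : ℝ≥0∞} {T : (Eucl n → ℂ) → (Eucl n → ℂ)} {β : ℝ} (hβ : 0 ≤ β)
    (h1 : ∀ f, MemHp n p f → hpNorm n p (T f) ≤ β * hpNorm n p f)
    (h2 : ∀ C, 0 ≤ C → (∀ f, MemHp n p f → hpNorm n p (T f) ≤ C * hpNorm n p f) → β ≤ C) :
    opNormHp n p T = β :=
  IsLeast.csInf_eq ⟨⟨hβ, h1⟩, fun C hC => h2 C hC.1 hC.2⟩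

end hardy

section bounds
variable {n : ℕ} {c : Eucl n}

lemma invK_rpow_le (hc : 1 < ‖c‖) {x : Eucl n} (hx : ‖x‖ ≤ 1) (β : ℝ) :
    invK c x ^ β ≤ invB c ^ |β| := by
  have hb := invB_gt hc
  have hk := invK_pos hc (ne_of_norm_le hc hx)
  rcases le_total 0 β with h | h
  · rw [abs_of_nonneg h]
    exact Real.rpow_le_rpow hk.le (invK_le hc hx) h
  · rw [abs_of_nonpos h, Real.rpow_neg (by linarith), ← Real.inv_rpow (by linarith)]
    exact Real.rpow_le_rpow_of_nonpos (by positivity) (le_invK hc hx) h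

lemma norm_kelvin (hc : 1 < ‖c‖) (f : Eucl n → ℂ) {x : Eucl n} (hx : ‖x‖ ≤ 1) :
    ‖kelvin c f x‖ = invK c x ^ (((n : ℝ) - 2) / 2) * ‖f (invI c x)‖ := by
  have hk := invK_pos hc (ne_of_norm_le hc hx)
  rw [kelvin, norm_smul, Real.norm_of_nonneg (Real.rpow_nonneg hk.le _)]

lemma continuousOn_kelvin (hc : 1 < ‖c‖) {f : Eucl n → ℂ} (hf : ContinuousOn f (closedBall 0 1)) :
    ContinuousOn (kelvin c f) (closedBall 0 1) := by
  refine ((continuousOn_invK hc).rpow_const fun x hx => Or.inl ?_).smul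
    (hf.comp (continuousOn_invI hc) fun x hx => ?_)
  · exact (invK_pos hc (ne_of_norm_le hc (mem_closedBall_zero_iff.1 hx))).ne'
  · exact mem_closedBall_zero_iff.2 (norm_invI_le hc (mem_closedBall_zero_iff.1 hx))

/-- On the boundary the Kelvin transform is a weighted isometry. -/
lemma integral_kelvin (hn : 1 ≤ n) (hc : 1 < ‖c‖) {f : Eucl n → ℂ}
    (hf : ContinuousOn f (uSphere n)) {q : ℝ} (hq : 1 ≤ q) :
    ∫ ζ, ‖kelvin c f ζ‖ ^ q ∂(sphMeasure n) =
      ∫ ζ, invK c ζ ^ ((n : ℝ) - 1 - q * (((n : ℝ) - 2) / 2)) * ‖f ζ‖ ^ q ∂(sphMeasure n) := by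
  set m := ((n : ℝ) - 2) / 2
  have hkpos : ∀ x : Eucl n, x ∈ uSphere n → 0 < invK c x := fun x hx =>
    invK_pos hc (ne_of_norm_le hc (mem_uSphere.1 hx).le)
  have hkc : ContinuousOn (fun x => invK c x ^ (-(q * m))) (uSphere n) :=
    ((continuousOn_invK hc).mono sphere_sub_closedBall).rpow_const fun x hx =>
      Or.inl (hkpos x hx).ne'
  have h := sph_integral_invI hn hc (G := fun x => invK c x ^ (-(q * m)) * ‖f x‖ ^ q)
    (hkc.mul (hf.norm.rpow_const fun x _ => Or.inr (by positivity)))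
    (fun x hx => mul_nonneg (Real.rpow_nonneg (hkpos x hx).le _) (by positivity))
  refine Eq.trans ?_ (h.trans ?_)
  · refine integral_congr_ae ?_
    filter_upwards [sph_ae n] with ζ hζ
    have h1 := (mem_uSphere.1 hζ).le
    have hp := hkpos ζ hζ
    rw [norm_kelvin hc f h1, invK_invI hc (ne_of_norm_le hc h1),
      Real.mul_rpow (Real.rpow_nonneg hp.le _) (norm_nonneg _), ← Real.rpow_mul hp.le,
      Real.inv_rpow hp.le, Real.rpow_neg hp.le, inv_inv, mul_comm m q]
  · refine integral_congr_ae ?_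
    filter_upwards [sph_ae n] with ζ hζ
    have hp := hkpos ζ hζ
    rw [← mul_assoc, ← Real.rpow_add hp, ← sub_eq_add_neg]

lemma kelvin_mean_le_boundary (hn : 2 ≤ n) (hc : 1 < ‖c‖) {f : Eucl n → ℂ}
    (hf : HarmOn f (uBall n)) (hfc : ContinuousOn f (closedBall 0 1)) {q : ℝ} (hq : 1 ≤ q)
    {r : ℝ} (hr : r ∈ Ico (0 : ℝ) 1) :
    ∫ ζ, ‖kelvin c f (r • ζ)‖ ^ q ∂(sphMeasure n) ≤
      invB c ^ |(n : ℝ) - 1 - q * (((n : ℝ) - 2) / 2)| * ∫ ζ, ‖f ζ‖ ^ q ∂(sphMeasure n) := by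
  have hn1 : 1 ≤ n := by omega
  refine (hp_mean_le_boundary hn (harmOn_kelvin hc hf) (continuousOn_kelvin hc hfc) hq hr.1
    hr.2).trans ?_
  have hfS := hfc.mono sphere_sub_closedBall
  have hkc : ContinuousOn (fun x => invK c x ^ ((n : ℝ) - 1 - q * (((n : ℝ) - 2) / 2)))
      (uSphere n) :=
    ((continuousOn_invK hc).mono sphere_sub_closedBall).rpow_const fun x hx =>
      Or.inl (invK_pos hc (ne_of_norm_le hc (mem_uSphere.1 hx).le)).ne'
  have hfq : ContinuousOn (fun x => ‖f x‖ ^ q) (uSphere n) :=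
    hfS.norm.rpow_const fun x _ => Or.inr (by positivity)
  rw [integral_kelvin hn1 hc hfS hq, ← integral_const_mul]
  refine integral_mono_ae (sph_integrable hn1 (hkc.mul hfq))
    ((sph_integrable hn1 hfq).const_mul _) ?_
  filter_upwards [sph_ae n] with ζ hζ
  exact mul_le_mul_of_nonneg_right (invK_rpow_le hc (mem_uSphere.1 hζ).le _) (by positivity)

/-- The bound on the means of a Kelvin transform, obtained by dilating `f` so that it extends
continuously to the sphere. -/
lemma kelvin_mean_le (hn : 2 ≤ n) (hc : 1 < ‖c‖) {f : Eucl n → ℂ}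
    (hf : HarmOn f (uBall n)) {q : ℝ} (hq : 1 ≤ q) {D : ℝ}
    (hD : ∀ t ∈ Ico (0 : ℝ) 1, ∫ ζ, ‖f (t • ζ)‖ ^ q ∂(sphMeasure n) ≤ D)
    {r : ℝ} (hr : r ∈ Ico (0 : ℝ) 1) :
    ∫ ζ, ‖kelvin c f (r • ζ)‖ ^ q ∂(sphMeasure n) ≤
      invB c ^ |(n : ℝ) - 1 - q * (((n : ℝ) - 2) / 2)| * D := by
  have hn1 : 1 ≤ n := by omega
  set β := (n : ℝ) - 1 - q * (((n : ℝ) - 2) / 2)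
  have hB : 0 ≤ invB c ^ |β| := Real.rpow_nonneg (by linarith [invB_gt hc]) _
  have hball : ∀ ζ ∈ uSphere n, ‖r • ζ‖ < 1 := fun ζ hζ => mem_uBall.1 (smul_sphere_mem hr hζ)
  have step : ∀ t ∈ Ico (0 : ℝ) 1,
      ∫ ζ, ‖kelvin c (fun x => f (t • x)) (r • ζ)‖ ^ q ∂(sphMeasure n) ≤ invB c ^ |β| * D := by
    intro t ht
    have hmem : ∀ x ∈ closedBall (0 : Eucl n) 1, t • x ∈ uBall n := by
      intro x hx
      rw [mem_uBall, norm_smul, Real.norm_of_nonneg ht.1]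
      have := mem_closedBall_zero_iff.1 hx
      exact (mul_le_of_le_one_right ht.1 this).trans_lt ht.2
    have h1 : HarmOn (fun x => f (t • x)) (uBall n) := by
      exact harmOn_dilate hf (LinearIsometryEquiv.refl ℝ (Eucl n)) t (s := uBall n)
        fun x hx => hmem x (ball_subset_closedBall hx)
    have h2 : ContinuousOn (fun x => f (t • x)) (closedBall 0 1) :=
      hf.1.continuousOn.comp (by fun_prop) hmem
    exact (kelvin_mean_le_boundary hn hc h1 h2 hq hr).trans
      (mul_le_mul_of_nonneg_left (hD t ht) hB)
  have hcont := sph_integral_cont hn1 (isCompact_Icc (a := (0 : ℝ)) (b := 1))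
    (H := fun t ζ => ‖kelvin c (fun x => f (t • x)) (r • ζ)‖ ^ q) (by
      refine ContinuousOn.rpow_const (ContinuousOn.norm ?_) fun _ _ => Or.inr (by positivity)
      have hsm : ContinuousOn (fun p : ℝ × Eucl n => r • p.2) (Icc (0 : ℝ) 1 ×ˢ uSphere n) := by
        fun_prop
      have hcl : MapsTo (fun p : ℝ × Eucl n => r • p.2) (Icc (0 : ℝ) 1 ×ˢ uSphere n)
          (closedBall 0 1) := fun p hp => mem_closedBall_zero_iff.2 (hball p.2 hp.2).le
      refine ((((continuousOn_invK hc).comp hsm hcl).rpow_const fun p hp => Or.inl ?_)).smul ?_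
      · exact (invK_pos hc (ne_of_norm_le hc (hball p.2 hp.2).le)).ne'
      · refine hf.1.continuousOn.comp
          (continuousOn_fst.smul ((continuousOn_invI hc).comp hsm hcl)) fun p hp => ?_
        rw [mem_uBall, norm_smul, Real.norm_of_nonneg hp.1.1]
        have h1 := norm_invI_lt hc (hball p.2 hp.2)
        exact (mul_le_of_le_one_left (norm_nonneg _) hp.1.2).trans_lt h1)
  have h3 := hcont 1 (right_mem_Icc.2 zero_le_one)
  simp only [ContinuousWithinAt, one_smul] at h3
  have h4 := h3.mono_left (nhdsWithin_mono (1 : ℝ) Ico_subset_Icc_self)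
  rw [nhdsWithin_Ico_eq_nhdsLT (zero_lt_one (α := ℝ))] at h4
  refine le_of_tendsto h4 ?_
  filter_upwards [Ico_mem_nhdsLT (zero_lt_one (α := ℝ))] with t ht using step t ht

/-- Exponential weights `exp (m⟨ζ, ζ₀⟩)` concentrate at `ζ₀` as `m → ∞`, so a continuous function
with nonnegative weighted means is nonnegative at `ζ₀`. -/
lemma concentrate (hn : 1 ≤ n) {ζ₀ : Eucl n} (hζ₀ : ‖ζ₀‖ = 1) {g : Eucl n → ℝ}
    (hg : ContinuousOn g (uSphere n))
    (h : ∀ m : ℕ, 0 ≤ ∫ ζ, g ζ * Real.exp (m * ⟪ζ, ζ₀⟫_ℝ) ∂(sphMeasure n)) : 0 ≤ g ζ₀ := by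
  have hprob : IsProbabilityMeasure (sphMeasure n) := sphMeasure_prob hn
  by_contra hneg
  push Not at hneg
  set L := -(g ζ₀) / 2 with hL
  have hLpos : 0 < L := by linarith
  obtain ⟨δ, hδ, hδg⟩ : ∃ δ > 0, ∀ ζ ∈ uSphere n, dist ζ ζ₀ < δ → g ζ < -L := by
    have h1 := hg ζ₀ (mem_uSphere.2 hζ₀)
    have h2 := h1.eventually_lt_const (show g ζ₀ < -L by linarith)
    obtain ⟨δ, hδ, hs⟩ := Metric.mem_nhdsWithin_iff.1 h2
    exact ⟨δ, hδ, fun ζ hζ hd => hs ⟨hd, hζ⟩⟩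
  obtain ⟨M, hM⟩ := (isCompact_uSphere n).exists_bound_of_continuousOn hg
  have hM0 : 0 ≤ M := (norm_nonneg _).trans (hM ζ₀ (mem_uSphere.2 hζ₀))
  have hinner : ∀ ζ ∈ uSphere n, ⟪ζ, ζ₀⟫_ℝ = 1 - dist ζ ζ₀ ^ 2 / 2 := by
    intro ζ hζ
    rw [dist_eq_norm, norm_sub_sq_real, mem_uSphere.1 hζ, hζ₀]; ring
  set κ := (sphMeasure n).real (ball ζ₀ (δ / 2)) with hκ
  have hκpos : 0 < κ := by
    rw [hκ, measureReal_def]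
    exact ENNReal.toReal_pos (sph_cap_pos hn hζ₀ (by positivity)).ne' (measure_ne_top _ _)
  have hmain : ∀ m : ℕ, L * κ * Real.exp (m * (1 - (δ / 2) ^ 2 / 2))
      ≤ M * Real.exp (m * (1 - δ ^ 2 / 2)) := by
    intro m
    have h1 := h m
    have hle : ∫ ζ, g ζ * Real.exp (m * ⟪ζ, ζ₀⟫_ℝ) ∂(sphMeasure n) ≤
        ∫ ζ, (M * Real.exp (m * (1 - δ ^ 2 / 2))
          - (ball ζ₀ (δ / 2)).indicator
            (fun _ => L * Real.exp (m * (1 - (δ / 2) ^ 2 / 2))) ζ) ∂(sphMeasure n) := by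
      refine integral_mono_ae (sph_integrable hn (hg.mul (by fun_prop))) ((integrable_const _).sub
        ((integrable_const _).indicator measurableSet_ball)) ?_
      filter_upwards [sph_ae n] with ζ hζ
      have hi := hinner ζ hζ
      have hm0 : (0 : ℝ) ≤ m := Nat.cast_nonneg m
      have hE := Real.exp_pos (m * ⟪ζ, ζ₀⟫_ℝ)
      have hE2 := Real.exp_pos (m * (1 - δ ^ 2 / 2))
      by_cases h1 : ζ ∈ ball ζ₀ (δ / 2)
      · have hd : dist ζ ζ₀ < δ / 2 := h1
        rw [indicator_of_mem h1]
        have h2 := hδg ζ hζ (by linarith)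
        have h3 : Real.exp (m * (1 - (δ / 2) ^ 2 / 2)) ≤ Real.exp (m * ⟪ζ, ζ₀⟫_ℝ) := by
          refine Real.exp_le_exp.2 (mul_le_mul_of_nonneg_left ?_ hm0)
          rw [hi]
          have := pow_le_pow_left₀ dist_nonneg hd.le 2
          linarith
        have h4 := mul_le_mul_of_nonneg_left h3 hLpos.le
        have h5 := mul_le_mul_of_nonneg_right h2.le hE.le
        have h6 := mul_nonneg hM0 hE2.le
        linarith
      · rw [indicator_of_notMem h1, sub_zero]
        by_cases h2 : dist ζ ζ₀ < δ
        · have h3 := hδg ζ hζ h2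
          have h5 := mul_le_mul_of_nonneg_right h3.le hE.le
          have h6 := mul_nonneg hM0 hE2.le
          have h7 := mul_nonneg hLpos.le hE.le
          linarith
        · push Not at h2
          have h3 : g ζ ≤ M := (le_abs_self _).trans (hM ζ hζ)
          refine mul_le_mul h3 (Real.exp_le_exp.2 (mul_le_mul_of_nonneg_left ?_ hm0)) hE.le hM0
          rw [hi]
          have := pow_le_pow_left₀ hδ.le h2 2
          linarith
    rw [integral_sub (integrable_const _) ((integrable_const _).indicator measurableSet_ball),
      integral_const, integral_indicator_const _ measurableSet_ball] at hle
    simp only [probReal_univ, smul_eq_mul, one_mul] at hle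
    rw [← hκ] at hle
    linarith
  obtain ⟨m, hm⟩ : ∃ m : ℕ, M / (L * κ) < m * (3 * δ ^ 2 / 8) := by
    obtain ⟨m, hm⟩ := exists_nat_gt (M / (L * κ) / (3 * δ ^ 2 / 8))
    exact ⟨m, by rwa [div_lt_iff₀ (by positivity)] at hm⟩
  have h1 := hmain m
  have h2 : Real.exp (m * (1 - (δ / 2) ^ 2 / 2))
      = Real.exp (m * (1 - δ ^ 2 / 2)) * Real.exp (m * (3 * δ ^ 2 / 8)) := by
    rw [← Real.exp_add]; congr 1; ring
  have h3 := Real.add_one_le_exp (m * (3 * δ ^ 2 / 8))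
  have hE2 := Real.exp_pos (m * (1 - δ ^ 2 / 2))
  rw [h2] at h1
  rw [div_lt_iff₀ (by positivity)] at hm
  have h4 : L * κ * Real.exp (m * (3 * δ ^ 2 / 8)) ≤ M := by
    refine le_of_mul_le_mul_right ?_ hE2
    linarith
  have h5 : 0 < L * κ := by positivity
  nlinarith

/-- The exponential `exp (a⟨x, ζ₀ + iζ₁⟩)`, harmonic when `ζ₀`, `ζ₁` are orthonormal. -/
noncomputable def isoExp (ζ₀ ζ₁ : Eucl n) (a : ℝ) (x : Eucl n) : ℂ :=
  Complex.exp (⟪x, a • ζ₀⟫_ℝ + ⟪x, a • ζ₁⟫_ℝ * Complex.I)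

lemma norm_isoExp (ζ₀ ζ₁ : Eucl n) (a : ℝ) (x : Eucl n) :
    ‖isoExp ζ₀ ζ₁ a x‖ = Real.exp (a * ⟪x, ζ₀⟫_ℝ) := by
  simp [isoExp, Complex.norm_exp, real_inner_smul_right]

lemma harmOn_isoExp {ζ₀ ζ₁ : Eucl n} (h0 : ‖ζ₀‖ = 1) (h1 : ‖ζ₁‖ = 1) (h01 : ⟪ζ₀, ζ₁⟫_ℝ = 0)
    (a : ℝ) (s : Set (Eucl n)) : HarmOn (isoExp ζ₀ ζ₁ a) s := by
  let l : Eucl n →L[ℝ] ℂ := (innerSL ℝ (a • ζ₀)).smulRight (1 : ℂ)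
    + (innerSL ℝ (a • ζ₁)).smulRight Complex.I
  have hl : ∀ x, l x = ⟪x, a • ζ₀⟫_ℝ + ⟪x, a • ζ₁⟫_ℝ * Complex.I := fun x => by
    simp [l, real_inner_smul_right, real_inner_comm x]
  have hf : isoExp ζ₀ ζ₁ a = fun x => Complex.exp (l x) := by funext x; rw [isoExp, hl]
  have hd : ∀ x, HasFDerivAt (fun x => Complex.exp (l x)) (Complex.exp (l x) • l) x := fun x =>
    l.hasFDerivAt.cexp
  have hfd : fderiv ℝ (fun x => Complex.exp (l x)) = fun x => Complex.exp (l x) • l := by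
    funext x; exact (hd x).fderiv
  rw [hf]
  refine ⟨(l.contDiff.cexp).contDiffOn, fun x _ => ?_⟩
  rw [lap_eq, hfd]
  have h2 : ∀ w, fderiv ℝ (fun x => Complex.exp (l x) • l) x w w = Complex.exp (l x) * (l w) ^ 2 := by
    intro w
    rw [((hd x).smul_const l).fderiv]
    simp [pow_two, mul_assoc]
  simp only [h2, ← Finset.mul_sum]
  have h3 : ∑ i, l (basisV n i) ^ 2 = 0 := by
    have e0 : ∑ i, (ζ₀ i) ^ 2 = 1 := by rw [← EuclideanSpace.real_norm_sq_eq, h0, one_pow]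
    have e1 : ∑ i, (ζ₁ i) ^ 2 = 1 := by rw [← EuclideanSpace.real_norm_sq_eq, h1, one_pow]
    have e01 : ∑ i, ζ₀ i * ζ₁ i = 0 := by
      rw [← h01, PiLp.inner_apply]
      exact Finset.sum_congr rfl fun i _ => by simp [mul_comm]
    have : ∀ i, l (basisV n i) ^ 2 = ((a ^ 2 * (ζ₀ i ^ 2 - ζ₁ i ^ 2) : ℝ) : ℂ)
        + ((2 * a ^ 2 * (ζ₀ i * ζ₁ i) : ℝ) : ℂ) * Complex.I := by
      intro i
      rw [hl, inner_basisV_left, inner_basisV_left]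
      simp only [PiLp.smul_apply, smul_eq_mul]
      push_cast
      ring_nf
      rw [Complex.I_sq]; ring
    simp only [this, Finset.sum_add_distrib, ← Finset.sum_mul, ← Complex.ofReal_sum,
      ← Finset.mul_sum, Finset.sum_sub_distrib, e0, e1, e01]
    simp
  rw [h3, mul_zero]

end bounds

/-! ### Sharpness -/

section sharp
variable {n : ℕ} {c : Eucl n}

lemma one_le_toReal {p : ℝ≥0∞} (hp : 1 ≤ p) (hpt : p ≠ ⊤) : 1 ≤ p.toReal := by
  simpa using ENNReal.toReal_mono hpt hp

/-- The exponent of the boundary weight is `p` times the exponent of the operator norm. -/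
lemma rpow_exponent {b q : ℝ} (hb : 0 < b) (hq : 1 ≤ q) :
    b ^ |(n : ℝ) - 1 - q * (((n : ℝ) - 2) / 2)| =
      (b ^ |((n : ℝ) - 1) * q⁻¹ - ((n : ℝ) - 2) / 2|) ^ q := by
  have hq0 : 0 < q := by linarith
  rw [← Real.rpow_mul hb.le]
  congr 1
  nth_rewrite 3 [← abs_of_pos hq0]
  rw [← abs_mul]
  congr 1
  field_simp

lemma kelvin_bound_top (hc : 1 < ‖c‖) {f : Eucl n → ℂ} {M : ℝ}
    (hM : ∀ x ∈ uBall n, ‖f x‖ ≤ M) {x : Eucl n} (hx : x ∈ uBall n) :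
    ‖kelvin c f x‖ ≤ invB c ^ |((n : ℝ) - 2) / 2| * M := by
  have hx1 := (mem_uBall.1 hx)
  rw [norm_kelvin hc f hx1.le]
  refine mul_le_mul (invK_rpow_le hc hx1.le _) (hM _ (mem_uBall.2 (norm_invI_lt hc hx1)))
    (norm_nonneg _) (Real.rpow_nonneg (by linarith [invB_gt hc]) _)

lemma MemHp.kelvin {p : ℝ≥0∞} (hn : 2 ≤ n) (hc : 1 < ‖c‖) (hp : 1 ≤ p) {f : Eucl n → ℂ}
    (hf : MemHp n p f) : MemHp n p (kelvin c f) ∧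
      hpNorm n p (kelvin c f) ≤
        invB c ^ |((n : ℝ) - 1) * (p⁻¹).toReal - ((n : ℝ) - 2) / 2| * hpNorm n p f := by
  have hb : 0 < invB c := by linarith [invB_gt hc]
  obtain ⟨hh, hbd⟩ := hf
  rw [MemHp, hpNorm, hpNorm]
  by_cases hpt : p = ⊤
  · simp only [hpt, if_true] at hbd ⊢
    have hM : ∀ x ∈ uBall n, ‖f x‖ ≤ sSup (hInfSet n f) := fun x hx => le_csSup hbd ⟨x, hx, rfl⟩
    have key : ∀ y ∈ hInfSet n (_root_.kelvin c f),
        y ≤ invB c ^ |((n : ℝ) - 2) / 2| * sSup (hInfSet n f) := by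
      rintro _ ⟨x, hx, rfl⟩
      exact kelvin_bound_top hc hM hx
    refine ⟨⟨harmOn_kelvin hc hh, ⟨_, key⟩⟩, csSup_le ⟨_, 0, by simp [uBall], rfl⟩ ?_⟩
    simpa using key
  · simp only [hpt, if_false] at hbd ⊢
    have hq := one_le_toReal hp hpt
    have hs : 0 ≤ sSup (hpNormSet n p.toReal f) := by
      have := hpNorm_nonneg p f
      rwa [hpNorm, if_neg hpt] at this
    have key := le_of_mem_hpNormSet (f := _root_.kelvin c f) hq
      (D := invB c ^ |((n : ℝ) - 1) * (p⁻¹).toReal - ((n : ℝ) - 2) / 2|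
        * sSup (hpNormSet n p.toReal f)) (by positivity) fun r hr => by
      have := kelvin_mean_le hn hc hh hq (fun t ht => mean_le_of_bddAbove hq hbd ht) hr
      rwa [rpow_exponent hb hq, ← Real.mul_rpow (by positivity) hs, ← ENNReal.toReal_inv] at this
    exact ⟨⟨harmOn_kelvin hc hh, ⟨_, key⟩⟩, csSup_le (hpNormSet_nonempty _ _) key⟩

lemma MemHp.of_continuousOn {p : ℝ≥0∞} (hn : 2 ≤ n) (hp : 1 ≤ p) (hpt : p ≠ ⊤) {f : Eucl n → ℂ}
    (hf : HarmOn f (uBall n)) (hfc : ContinuousOn f (closedBall 0 1)) :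
    MemHp n p f ∧ hpNorm n p f ≤ (∫ ζ, ‖f ζ‖ ^ p.toReal ∂(sphMeasure n)) ^ (1 / p.toReal) := by
  have hq := one_le_toReal hp hpt
  have h0 : 0 ≤ ∫ ζ, ‖f ζ‖ ^ p.toReal ∂(sphMeasure n) := integral_nonneg fun ζ => by positivity
  have key := le_of_mem_hpNormSet (f := f) hq
    (D := (∫ ζ, ‖f ζ‖ ^ p.toReal ∂(sphMeasure n)) ^ (1 / p.toReal)) (by positivity) fun r hr => by
      rw [one_div, Real.rpow_inv_rpow h0 (by positivity)]
      exact hp_mean_le_boundary hn hf hfc hq hr.1 hr.2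
  rw [MemHp, hpNorm, if_neg hpt, if_neg hpt]
  exact ⟨⟨hf, ⟨_, key⟩⟩, csSup_le (hpNormSet_nonempty _ _) key⟩

/-- A boundary integral is the limit of interior means, hence is bounded by the `h^p` norm. -/
lemma boundary_mean_le {p : ℝ≥0∞} (hn : 2 ≤ n) (hp : 1 ≤ p) (hpt : p ≠ ⊤) {f : Eucl n → ℂ}
    (hf : MemHp n p f) (hfc : ContinuousOn f (closedBall 0 1)) :
    ∫ ζ, ‖f ζ‖ ^ p.toReal ∂(sphMeasure n) ≤ hpNorm n p f ^ p.toReal := by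
  have hq := one_le_toReal hp hpt
  obtain ⟨-, hbd⟩ := hf
  rw [if_neg hpt] at hbd
  rw [hpNorm, if_neg hpt]
  have hcont := sph_integral_cont (by omega : 1 ≤ n) (isCompact_Icc (a := (0 : ℝ)) (b := 1))
    (H := fun t ζ => ‖f (t • ζ)‖ ^ p.toReal) (by
      refine ContinuousOn.rpow_const (ContinuousOn.norm ?_) fun _ _ => Or.inr (by positivity)
      refine hfc.comp (by fun_prop) fun y hy => mem_closedBall_zero_iff.2 ?_
      rw [norm_smul, mem_uSphere.1 hy.2, mul_one, Real.norm_of_nonneg hy.1.1]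
      exact hy.1.2)
  have h3 := hcont 1 (right_mem_Icc.2 zero_le_one)
  simp only [ContinuousWithinAt, one_smul] at h3
  have h4 := h3.mono_left (nhdsWithin_mono (1 : ℝ) Ico_subset_Icc_self)
  rw [nhdsWithin_Ico_eq_nhdsLT (zero_lt_one (α := ℝ))] at h4
  refine le_of_tendsto h4 ?_
  filter_upwards [Ico_mem_nhdsLT (zero_lt_one (α := ℝ))] with t ht
  exact mean_le_of_bddAbove hq hbd ht

lemma hpNorm_one {p : ℝ≥0∞} (hn : 1 ≤ n) :
    MemHp n p (fun _ => (1 : ℂ)) ∧ hpNorm n p (fun _ => (1 : ℂ)) = 1 := by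
  have := sphMeasure_prob hn
  have hh : HarmOn (fun _ : Eucl n => (1 : ℂ)) (uBall n) := ⟨contDiffOn_const, fun x _ => lap_const _ _⟩
  have e1 : hInfSet n (fun _ => (1 : ℂ)) = {1} := by
    ext y; constructor
    · rintro ⟨x, -, rfl⟩; simp
    · rintro rfl; exact ⟨0, by simp [uBall], by simp⟩
  have e2 : ∀ q, hpNormSet n q (fun _ => (1 : ℂ)) = {1} := fun q => by
    ext y; constructor
    · rintro ⟨x, -, rfl⟩; simp
    · rintro rfl; exact ⟨0, by simp, by simp⟩
  rw [MemHp, hpNorm, e1, e2]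
  exact ⟨⟨hh, by simp⟩, by simp⟩

lemma norm_pole_dir (hc : 1 < ‖c‖) : ‖(‖c‖⁻¹ • c : Eucl n)‖ = 1 := by
  rw [norm_smul, norm_inv, norm_norm, inv_mul_cancel₀ (by linarith)]

lemma invK_pole_dir (hc : 1 < ‖c‖) : invK c (‖c‖⁻¹ • c) = invB c := by
  have h0 : ‖c‖ ≠ 0 := by linarith
  have h1 : ‖c‖ - 1 ≠ 0 := by linarith
  have h2 : ‖(‖c‖⁻¹ • c - c : Eucl n)‖ ^ 2 = (‖c‖ - 1) ^ 2 := by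
    have : (‖c‖⁻¹ • c - c : Eucl n) = (‖c‖⁻¹ - 1) • c := by rw [sub_smul, one_smul]
    rw [this, norm_smul, mul_pow, Real.norm_eq_abs, sq_abs]
    field_simp
    ring
  rw [invK, h2, invB]
  field_simp
  ring

lemma invK_neg_pole_dir (hc : 1 < ‖c‖) : invK c (-(‖c‖⁻¹ • c)) = (invB c)⁻¹ := by
  have h0 : ‖c‖ ≠ 0 := by linarith
  have h1 : ‖c‖ - 1 ≠ 0 := by linarith
  have h3 : ‖c‖ + 1 ≠ 0 := by linarith
  have h2 : ‖(-(‖c‖⁻¹ • c) - c : Eucl n)‖ ^ 2 = (‖c‖ + 1) ^ 2 := by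
    have : (-(‖c‖⁻¹ • c) - c : Eucl n) = (-(‖c‖⁻¹ + 1)) • c := by
      rw [neg_smul, add_smul, one_smul]; abel
    rw [this, norm_smul, mul_pow, Real.norm_eq_abs, sq_abs]
    field_simp
    ring
  rw [invK, h2, invB]
  field_simp
  ring

lemma exists_unit_orthogonal (hn : 2 ≤ n) (v : Eucl n) : ∃ w : Eucl n, ‖w‖ = 1 ∧ ⟪v, w⟫_ℝ = 0 := by
  have hfr : 0 < Module.finrank ℝ (ℝ ∙ v)ᗮ := by
    have h1 := Submodule.finrank_add_finrank_orthogonal (ℝ ∙ v)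
    have h2 : Module.finrank ℝ (ℝ ∙ v) ≤ 1 := by
      simpa using finrank_span_le_card (R := ℝ) ({v} : Set (Eucl n))
    rw [finrank_euclideanSpace_fin] at h1
    omega
  have : Nontrivial (ℝ ∙ v)ᗮ := Module.finrank_pos_iff.1 hfr
  obtain ⟨⟨w, hw⟩, hw0⟩ := exists_ne (0 : (ℝ ∙ v)ᗮ)
  have hw0' : ‖w‖ ≠ 0 := by
    rw [norm_ne_zero_iff]; exact fun h => hw0 (Subtype.ext h)
  refine ⟨‖w‖⁻¹ • w, ?_, ?_⟩
  · rw [norm_smul, norm_inv, norm_norm, inv_mul_cancel₀ hw0']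
  · rw [real_inner_smul_right, Submodule.mem_orthogonal_singleton_iff_inner_right.1 hw, mul_zero]

/-- Sharpness: the constant is approached by the constant function for `p = ∞`, and by
harmonic exponentials concentrating where the boundary weight is extremal for `p < ∞`. -/
lemma kelvin_lower {p : ℝ≥0∞} (hn : 2 ≤ n) (hc : 1 < ‖c‖) (hp : 1 ≤ p) {C : ℝ} (hC : 0 ≤ C)
    (h : ∀ f, MemHp n p f → hpNorm n p (kelvin c f) ≤ C * hpNorm n p f) :
    invB c ^ |((n : ℝ) - 1) * (p⁻¹).toReal - ((n : ℝ) - 2) / 2| ≤ C := by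
  have hb : 0 < invB c := by linarith [invB_gt hc]
  by_cases hpt : p = ⊤
  · have hm : (0 : ℝ) ≤ ((n : ℝ) - 2) / 2 := by
      have : (2 : ℝ) ≤ n := by exact_mod_cast hn
      linarith
    obtain ⟨m1, e1⟩ := hpNorm_one (n := n) (p := p) (by omega)
    have h1 := h _ m1
    rw [e1, mul_one] at h1
    have h2 := (m1.kelvin hn hc hp).1.2
    rw [if_pos hpt] at h2
    rw [hpNorm, if_pos hpt] at h1
    simp only [hpt, ENNReal.inv_top, ENNReal.toReal_zero, mul_zero, zero_sub, abs_neg,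
      abs_of_nonneg hm]
    have h3 : ∀ t ∈ Ico (0 : ℝ) 1, invK c (t • (‖c‖⁻¹ • c)) ^ (((n : ℝ) - 2) / 2) ≤ C := by
      intro t ht
      have hx := smul_sphere_mem ht (mem_uSphere.2 (norm_pole_dir hc))
      have : ‖kelvin c (fun _ => 1) (t • (‖c‖⁻¹ • c))‖ ≤ C :=
        (le_csSup h2 ⟨_, hx, rfl⟩).trans h1
      rwa [norm_kelvin hc _ (mem_uBall.1 hx).le, norm_one, mul_one] at this
    have hcont : ContinuousWithinAt (fun t : ℝ => invK c (t • (‖c‖⁻¹ • c)) ^ (((n : ℝ) - 2) / 2))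
        (Ico 0 1) 1 := by
      refine ContinuousAt.continuousWithinAt (ContinuousAt.rpow_const ?_ (Or.inr hm))
      refine ContinuousAt.comp (f := fun t : ℝ => t • (‖c‖⁻¹ • c)) (g := invK c)
        (continuousAt_invK ?_) (by fun_prop)
      rw [one_smul]
      exact ne_of_norm_le hc (norm_pole_dir hc).le
    rw [ContinuousWithinAt, one_smul, invK_pole_dir hc,
      nhdsWithin_Ico_eq_nhdsLT (zero_lt_one (α := ℝ))] at hcont
    refine le_of_tendsto hcont ?_
    filter_upwards [Ico_mem_nhdsLT (zero_lt_one (α := ℝ))] with t ht using h3 t ht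
  · have hq := one_le_toReal hp hpt
    have hq0 : 0 < p.toReal := by linarith
    set q := p.toReal with hqdef
    set β := (n : ℝ) - 1 - q * (((n : ℝ) - 2) / 2) with hβ
    obtain ⟨ζ₀, hζ₀, hk⟩ : ∃ ζ₀ : Eucl n, ‖ζ₀‖ = 1 ∧ invK c ζ₀ ^ β = invB c ^ |β| := by
      rcases le_total 0 β with hs | hs
      · exact ⟨_, norm_pole_dir hc, by rw [invK_pole_dir hc, abs_of_nonneg hs]⟩
      · exact ⟨-(‖c‖⁻¹ • c), by rw [norm_neg, norm_pole_dir hc], by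
          rw [invK_neg_pole_dir hc, abs_of_nonpos hs, Real.rpow_neg hb.le, Real.inv_rpow hb.le]⟩
    obtain ⟨ζ₁, hζ₁, h01⟩ := exists_unit_orthogonal hn ζ₀
    have hkpos : ∀ x : Eucl n, x ∈ uSphere n → 0 < invK c x := fun x hx =>
      invK_pos hc (ne_of_norm_le hc (mem_uSphere.1 hx).le)
    have hkc : ContinuousOn (fun x => invK c x ^ β) (uSphere n) :=
      ((continuousOn_invK hc).mono sphere_sub_closedBall).rpow_const fun x hx =>
        Or.inl (hkpos x hx).ne'
    -- Test functions `exp ((j/q)⟨x, ζ₀ + iζ₁⟩)`, whose `q`-th power has modulus `exp (j⟨x, ζ₀⟩)`.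
    have key : 0 ≤ C ^ q - invK c ζ₀ ^ β := by
      refine concentrate (by omega) hζ₀ (g := fun x => C ^ q - invK c x ^ β)
        (continuousOn_const.sub hkc) fun j => ?_
      have hharm := harmOn_isoExp hζ₀ hζ₁ h01 (j / q)
      have hfc : ContinuousOn (isoExp ζ₀ ζ₁ (j / q)) (closedBall 0 1) :=
        (hharm univ).1.continuousOn.mono (subset_univ _)
      have hnorm : ∀ x, ‖isoExp ζ₀ ζ₁ (j / q) x‖ ^ q = Real.exp (j * ⟪x, ζ₀⟫_ℝ) := fun x => by
        rw [norm_isoExp, ← Real.exp_mul]; congr 1; field_simp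
      obtain ⟨hmem, hle⟩ := MemHp.of_continuousOn hn hp hpt (hharm _) hfc
      have e1 := boundary_mean_le hn hp hpt (hmem.kelvin hn hc hp).1 (continuousOn_kelvin hc hfc)
      rw [← hqdef, integral_kelvin (by omega) hc (hfc.mono sphere_sub_closedBall) hq] at e1
      have e2 := Real.rpow_le_rpow (hpNorm_nonneg _ _) (h _ hmem) hq0.le
      have h0 : 0 ≤ ∫ ζ, ‖isoExp ζ₀ ζ₁ (j / q) ζ‖ ^ q ∂(sphMeasure n) :=
        integral_nonneg fun ζ => by positivity
      have e3 := Real.rpow_le_rpow (hpNorm_nonneg _ _) hle hq0.le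
      rw [← hqdef, one_div, Real.rpow_inv_rpow h0 (by positivity)] at e3
      rw [Real.mul_rpow hC (hpNorm_nonneg _ _)] at e2
      have e4 := mul_le_mul_of_nonneg_left e3 (Real.rpow_nonneg hC q)
      simp only [hnorm] at e1 e4
      have i1 : Integrable (fun ζ => Real.exp (j * ⟪ζ, ζ₀⟫_ℝ)) (sphMeasure n) :=
        sph_integrable (by omega) (by fun_prop)
      have i2 : Integrable (fun ζ => invK c ζ ^ β * Real.exp (j * ⟪ζ, ζ₀⟫_ℝ)) (sphMeasure n) :=
        sph_integrable (by omega) (hkc.mul (by fun_prop))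
      simp only [sub_mul]
      rw [integral_sub (i1.const_mul _) i2, integral_const_mul]
      linarith
    rw [hk, rpow_exponent hb hq, sub_nonneg] at key
    rw [ENNReal.toReal_inv]
    exact (Real.rpow_le_rpow_iff (by positivity) hC hq0).1 key

end sharp

/-! ### Normal form of Möbius transformations -/

section mobius
variable {n : ℕ}

/-- The two normal forms of a Möbius transformation of `ℝ̂ⁿ`: a similarity fixing `∞`, or an
inversion centred at the pole `c` followed by a similarity. -/
def MobForm (g : EuclHat n → EuclHat n) : Prop :=
  (∃ (b : Eucl n) (s : ℝ) (A : Eucl n ≃ₗᵢ[ℝ] Eucl n), 0 < s ∧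
    (∀ x : Eucl n, g ↑x = ↑(b + s • A x)) ∧ g OnePoint.infty = OnePoint.infty) ∨
  (∃ (b c : Eucl n) (s : ℝ) (A : Eucl n ≃ₗᵢ[ℝ] Eucl n), 0 < s ∧
    (∀ x : Eucl n, x ≠ c → g ↑x = ↑(b + (s / ‖x - c‖ ^ 2) • A (x - c))) ∧
    g ↑c = OnePoint.infty ∧ g OnePoint.infty = ↑b)

lemma sphereRefl_coe_of_ne {a x : Eucl n} (r : ℝ) (h : x ≠ a) :
    sphereRefl n a r ↑x = ↑(a + (r ^ 2 / ‖x - a‖ ^ 2) • (x - a)) :=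
  if_neg h

lemma sphereRefl_coe_self (a : Eucl n) (r : ℝ) : sphereRefl n a r ↑a = OnePoint.infty :=
  if_pos rfl

lemma sphereRefl_infty (a : Eucl n) (r : ℝ) : sphereRefl n a r OnePoint.infty = ↑a := rfl

lemma refl_orth_apply (d x : Eucl n) :
    (ℝ ∙ d)ᗮ.reflection x = x - (2 * ⟪d, x⟫_ℝ / ‖d‖ ^ 2) • d := by
  rw [Submodule.reflection_orthogonal_apply, Submodule.reflection_singleton_apply]
  simp only [RCLike.ofReal_real_eq_id, id_eq]
  rw [mul_div_assoc, mul_smul, two_smul, two_smul]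
  abel

lemma hyperRefl_coe {a : Eucl n} (ha : ‖a‖ = 1) (t : ℝ) (x : Eucl n) :
    hyperRefl n a t ↑x = ↑((ℝ ∙ a)ᗮ.reflection x + (2 * t) • a) := by
  rw [refl_orth_apply, ha, real_inner_comm]
  change (((x - (2 * (⟪x, a⟫_ℝ - t)) • a : Eucl n)) : EuclHat n) = _
  congr 1
  module

lemma hyperRefl_infty (a : Eucl n) (t : ℝ) : hyperRefl n a t OnePoint.infty = OnePoint.infty := rfl

lemma MobForm.hyper {g : EuclHat n → EuclHat n} (hg : MobForm g) {a : Eucl n} (ha : ‖a‖ = 1)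
    (t : ℝ) : MobForm (hyperRefl n a t ∘ g) := by
  rcases hg with ⟨b, s, A, hs, h1, h2⟩ | ⟨b, c, s, A, hs, h1, h2, h3⟩
  · refine Or.inl ⟨(ℝ ∙ a)ᗮ.reflection b + (2 * t) • a, s, A.trans (ℝ ∙ a)ᗮ.reflection, hs,
      fun x => ?_, ?_⟩
    · rw [Function.comp_apply, h1, hyperRefl_coe ha, map_add, map_smul,
        LinearIsometryEquiv.trans_apply]
      congr 1
      abel
    · rw [Function.comp_apply, h2, hyperRefl_infty]
  · refine Or.inr ⟨(ℝ ∙ a)ᗮ.reflection b + (2 * t) • a, c, s, A.trans (ℝ ∙ a)ᗮ.reflection, hs,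
      fun x hx => ?_, ?_, ?_⟩
    · rw [Function.comp_apply, h1 x hx, hyperRefl_coe ha, map_add, map_smul,
        LinearIsometryEquiv.trans_apply]
      congr 1
      abel
    · rw [Function.comp_apply, h2, hyperRefl_infty]
    · rw [Function.comp_apply, h3, hyperRefl_coe ha]

lemma inv_sum_norm {d y : Eucl n} (hd : d ≠ 0) (hy : y ≠ 0) (s : ℝ) :
    ‖y + (s / ‖d‖ ^ 2) • d‖ ^ 2 * ‖d‖ ^ 2 = ‖y‖ ^ 2 * ‖d + (s / ‖y‖ ^ 2) • y‖ ^ 2 := by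
  have h1 := norm_ne_zero_iff.2 hd
  have h2 := norm_ne_zero_iff.2 hy
  rw [norm_add_sq_real, norm_add_sq_real, norm_smul, norm_smul, mul_pow, mul_pow,
    real_inner_smul_right, real_inner_smul_right, Real.norm_eq_abs, Real.norm_eq_abs, sq_abs,
    sq_abs, real_inner_comm d y]
  field_simp

/-- Inverting a translated inversion: `x ↦ (d + s x/|x|²)/|d + s x/|x|²|²` is again a reflection
followed by an inversion, up to translations. -/
lemma inv_sum {d y : Eucl n} (hd : d ≠ 0) (hy : y ≠ 0) {s : ℝ}
    (hv : y + (s / ‖d‖ ^ 2) • d ≠ 0) :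
    (1 / ‖d + (s / ‖y‖ ^ 2) • y‖ ^ 2) • (d + (s / ‖y‖ ^ 2) • y) =
      (1 / ‖d‖ ^ 2) • d + (s / ‖d‖ ^ 2 / ‖y + (s / ‖d‖ ^ 2) • d‖ ^ 2) •
        (ℝ ∙ d)ᗮ.reflection (y + (s / ‖d‖ ^ 2) • d) := by
  have h1 := norm_ne_zero_iff.2 hd
  have h2 := norm_ne_zero_iff.2 hy
  have h3 := norm_ne_zero_iff.2 hv
  have key := inv_sum_norm hd hy s
  have hw : ‖d + (s / ‖y‖ ^ 2) • y‖ ^ 2 = ‖y + (s / ‖d‖ ^ 2) • d‖ ^ 2 * ‖d‖ ^ 2 / ‖y‖ ^ 2 := by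
    rw [key]; field_simp
  have hv2 : ‖y + (s / ‖d‖ ^ 2) • d‖ ^ 2 = ‖y‖ ^ 2 + 2 * (s / ‖d‖ ^ 2 * ⟪d, y⟫_ℝ) + s ^ 2 / ‖d‖ ^ 2 := by
    rw [norm_add_sq_real, norm_smul, mul_pow, real_inner_smul_right, Real.norm_eq_abs, sq_abs,
      real_inner_comm d y]
    field_simp
  have hi : ⟪d, y + (s / ‖d‖ ^ 2) • d⟫_ℝ = ⟪d, y⟫_ℝ + s := by
    rw [inner_add_right, real_inner_smul_right, real_inner_self_eq_norm_sq]
    field_simp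
  rw [hw, refl_orth_apply, hi]
  set N := ‖y + (s / ‖d‖ ^ 2) • d‖ with hN
  match_scalars
  · have hv3 : N ^ 2 * ‖d‖ ^ 2 = ‖y‖ ^ 2 * ‖d‖ ^ 2 + 2 * (s * ⟪d, y⟫_ℝ) + s ^ 2 := by
      rw [hv2]; field_simp
    field_simp
    linarith
  · field_simp

lemma MobForm.sphere {g : EuclHat n → EuclHat n} (hg : MobForm g) (a : Eucl n) {r : ℝ}
    (hr : 0 < r) : MobForm (sphereRefl n a r ∘ g) := by
  rcases hg with ⟨b, s, A, hs, h1, h2⟩ | ⟨b, c, s, A, hs, h1, h2, h3⟩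
  · have hsub : ∀ x, b + s • A x - a = s • A (x - A.symm (s⁻¹ • (a - b))) := fun x => by
      rw [map_sub, A.apply_symm_apply, smul_sub, smul_inv_smul₀ hs.ne']; abel
    refine Or.inr ⟨a, A.symm (s⁻¹ • (a - b)), r ^ 2 / s, A, by positivity, fun x hx => ?_, ?_, ?_⟩
    · have hne : b + s • A x ≠ a := by
        rw [← sub_ne_zero, hsub]
        refine smul_ne_zero hs.ne' ?_
        rw [← norm_ne_zero_iff, A.norm_map, norm_ne_zero_iff]
        exact sub_ne_zero.2 hx
      rw [Function.comp_apply, h1, sphereRefl_coe_of_ne r hne, hsub, norm_smul, A.norm_map,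
        Real.norm_of_nonneg hs.le, smul_smul]
      congr 3
      field_simp
    · have : b + s • A (A.symm (s⁻¹ • (a - b))) = a := by
        rw [← sub_eq_zero, hsub, sub_self, map_zero, smul_zero]
      rw [Function.comp_apply, h1, this, sphereRefl_coe_self]
    · rw [Function.comp_apply, h2, sphereRefl_infty]
  · by_cases hd : b - a = 0
    · obtain rfl : b = a := sub_eq_zero.1 hd
      refine Or.inl ⟨b - (r ^ 2 / s) • A c, r ^ 2 / s, A, by positivity, fun x => ?_, ?_⟩
      · by_cases hx : x = c
        · rw [Function.comp_apply, hx, h2, sphereRefl_infty, sub_add_cancel]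
        · have hy : ‖x - c‖ ≠ 0 := norm_ne_zero_iff.2 (sub_ne_zero.2 hx)
          have hy' : A (x - c) ≠ 0 := by
            rw [← norm_ne_zero_iff, A.norm_map]; exact hy
          have hne : b + (s / ‖x - c‖ ^ 2) • A (x - c) ≠ b := by
            rw [Ne, add_eq_left]
            exact smul_ne_zero (by positivity) hy'
          rw [Function.comp_apply, h1 x hx, sphereRefl_coe_of_ne r hne, add_sub_cancel_left,
            norm_smul, A.norm_map, smul_smul, Real.norm_of_nonneg (by positivity)]
          have e : r ^ 2 / (s / ‖x - c‖ ^ 2 * ‖x - c‖) ^ 2 * (s / ‖x - c‖ ^ 2) = r ^ 2 / s := by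
            field_simp
          rw [e, map_sub, smul_sub]
          congr 1
          abel
      · rw [Function.comp_apply, h3, sphereRefl_coe_self]
    · set d := b - a with hddef
      have hdn : ‖d‖ ≠ 0 := norm_ne_zero_iff.2 hd
      have hba : b ≠ a := sub_ne_zero.1 hd
      set c' := c - A.symm ((s / ‖d‖ ^ 2) • d) with hc'
      have hv : ∀ x, A (x - c') = A (x - c) + (s / ‖d‖ ^ 2) • d := fun x => by
        rw [hc', ← sub_add, map_add, A.apply_symm_apply]
      have hbsub : ∀ z : Eucl n, b + z - a = d + z := fun z => by rw [hddef]; abel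
      refine Or.inr ⟨a + (r ^ 2 / ‖d‖ ^ 2) • d, c', r ^ 2 * s / ‖d‖ ^ 2,
        A.trans (ℝ ∙ d)ᗮ.reflection, by positivity, fun x hx => ?_, ?_, ?_⟩
      · rw [LinearIsometryEquiv.trans_apply, ← A.norm_map (x - c'), hv, Function.comp_apply]
        have hvne : A (x - c) + (s / ‖d‖ ^ 2) • d ≠ 0 := by
          rw [← hv, ← norm_ne_zero_iff, A.norm_map, norm_ne_zero_iff]
          exact sub_ne_zero.2 hx
        by_cases hxc : x = c
        · rw [hxc, h2, sphereRefl_infty, sub_self, map_zero, zero_add, map_smul,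
            Submodule.reflection_orthogonalComplement_singleton_eq_neg, norm_smul,
            Real.norm_of_nonneg (by positivity)]
          congr 1
          rw [add_assoc, left_eq_add, smul_neg, smul_neg, smul_smul, ← sub_eq_add_neg, ← sub_smul]
          convert zero_smul ℝ d using 2
          field_simp
          ring
        · have hy : A (x - c) ≠ 0 := by
            rw [← norm_ne_zero_iff, A.norm_map, norm_ne_zero_iff]
            exact sub_ne_zero.2 hxc
          have hw : d + (s / ‖A (x - c)‖ ^ 2) • A (x - c) ≠ 0 := by
            intro h
            have := inv_sum_norm hd hy s
            rw [h, norm_zero, zero_pow two_ne_zero, mul_zero] at this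
            exact mul_ne_zero (pow_ne_zero 2 (norm_ne_zero_iff.2 hvne)) (pow_ne_zero 2 hdn) this
          rw [h1 x hxc, ← A.norm_map (x - c), sphereRefl_coe_of_ne r, hbsub]
          · rw [← mul_one_div, mul_smul, inv_sum hd hy hvne, smul_add, smul_smul, smul_smul,
              mul_one_div, add_assoc]
            congr 4
            ring
          · rw [← sub_ne_zero, hbsub]; exact hw
      · rw [Function.comp_apply]
        have hcc : c' ≠ c := by
          intro h
          have := hv c
          rw [h, sub_self, map_zero, zero_add] at this
          exact smul_ne_zero (by positivity) hd this.symm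
        have hvz : A (c' - c) + (s / ‖d‖ ^ 2) • d = 0 := by rw [← hv, sub_self, map_zero]
        have hy : A (c' - c) ≠ 0 := by
          rw [← norm_ne_zero_iff, A.norm_map, norm_ne_zero_iff]
          exact sub_ne_zero.2 hcc
        have hw : d + (s / ‖A (c' - c)‖ ^ 2) • A (c' - c) = 0 := by
          have := inv_sum_norm hd hy s
          rw [hvz, norm_zero, zero_pow two_ne_zero, zero_mul] at this
          have := (mul_eq_zero.1 this.symm).resolve_left (pow_ne_zero 2 (norm_ne_zero_iff.2 hy))
          exact norm_eq_zero.1 (pow_eq_zero_iff two_ne_zero |>.1 this)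
        have : b + (s / ‖A (c' - c)‖ ^ 2) • A (c' - c) = a := by
          rw [← sub_eq_zero, hbsub]; exact hw
        rw [h1 _ hcc, ← A.norm_map (c' - c), this, sphereRefl_coe_self]
      · rw [Function.comp_apply, h3, sphereRefl_coe_of_ne r hba]

lemma MobForm.of_isMobiusHat {g : EuclHat n → EuclHat n} (hg : IsMobiusHat n g) : MobForm g := by
  obtain ⟨L, -, hL, rfl⟩ := hg
  induction L with
  | nil =>
    exact Or.inl ⟨0, 1, LinearIsometryEquiv.refl ℝ _, one_pos, fun x => by simp, rfl⟩
  | cons f L ih =>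
    have h := ih fun f hf => hL f (List.mem_cons_of_mem _ hf)
    rw [List.foldr_cons]
    rcases hL f List.mem_cons_self with ⟨a, r, hr, rfl⟩ | ⟨a, t, ha, rfl⟩
    · exact h.sphere a hr
    · exact h.hyper ha t

end mobius

/-! ### Möbius self-maps of the ball -/

section mobiusBall
variable {n : ℕ}

/-- A similarity mapping the unit ball onto itself is linear and isometric. -/
lemma similarity_ball (hn : 2 ≤ n) {b : Eucl n} {s : ℝ} (hs : 0 < s) (A : Eucl n ≃ₗᵢ[ℝ] Eucl n)
    (h : BijOn (fun x => b + s • A x) (uBall n) (uBall n)) : b = 0 ∧ s = 1 := by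
  obtain ⟨e, he, -⟩ := exists_unit_orthogonal hn (0 : Eucl n)
  have hcl : closure (uBall n) = closedBall (0 : Eucl n) 1 := closure_ball _ one_ne_zero
  -- An affine similarity mapping the closed ball into itself satisfies the parallelogram bound.
  have key : ∀ (b : Eucl n) (s : ℝ) (A : Eucl n ≃ₗᵢ[ℝ] Eucl n),
      MapsTo (fun x => b + s • A x) (uBall n) (uBall n) → ‖b‖ ^ 2 + s ^ 2 ≤ 1 := by
    intro b s A hm
    have h1 := hm.closure (by fun_prop : Continuous fun x : Eucl n => b + s • A x)
    rw [hcl] at h1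
    have h2 : ‖b + s • A e‖ ≤ 1 := mem_closedBall_zero_iff.1 (h1 (mem_closedBall_zero_iff.2 he.le))
    have h3 : ‖b + s • A (-e)‖ ≤ 1 := mem_closedBall_zero_iff.1
      (h1 (mem_closedBall_zero_iff.2 ((norm_neg e).trans he).le))
    rw [map_neg, smul_neg, ← sub_eq_add_neg] at h3
    have h4 := parallelogram_law_with_norm ℝ b (s • A e)
    rw [norm_smul, A.norm_map, he, mul_one, Real.norm_eq_abs, sq_abs] at h4
    nlinarith [norm_nonneg (b + s • A e), norm_nonneg (b - s • A e)]
  have k1 := key b s A h.mapsTo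
  have k2 := key (-(s⁻¹ • A.symm b)) s⁻¹ A.symm fun y hy => by
    obtain ⟨x, hx, rfl⟩ := h.surjOn hy
    have : -(s⁻¹ • A.symm b) + s⁻¹ • A.symm (b + s • A x) = x := by
      rw [map_add, map_smul, A.symm_apply_apply, smul_add, inv_smul_smul₀ hs.ne']
      abel
    simpa only [this] using hx
  rw [norm_neg, norm_smul, A.symm.norm_map, Real.norm_of_nonneg (by positivity)] at k2
  have k3 : ‖b‖ ^ 2 + 1 ≤ s ^ 2 := by
    have := mul_le_mul_of_nonneg_left k2 (sq_nonneg s)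
    have e : s ^ 2 * ((s⁻¹ * ‖b‖) ^ 2 + s⁻¹ ^ 2) = ‖b‖ ^ 2 + 1 := by field_simp
    linarith
  have hb : ‖b‖ ^ 2 = 0 := by nlinarith [sq_nonneg ‖b‖]
  have hs2 : s ^ 2 = 1 := by nlinarith
  exact ⟨norm_eq_zero.1 ((pow_eq_zero_iff two_ne_zero).1 hb),
    (pow_eq_one_iff_of_nonneg hs.le two_ne_zero).1 hs2⟩

/-- A Möbius self-map of the ball is an isometry, possibly composed with the inversion in the
sphere orthogonal to `S` centred at its pole. -/
lemma IsMobiusBall.exists_form (hn : 2 ≤ n) {φ : Eucl n → Eucl n} (hφ : IsMobiusBall n φ) :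
    ∃ A : Eucl n ≃ₗᵢ[ℝ] Eucl n,
      (∀ x ∈ uBall n, φ x = A x) ∨
        ∃ c : Eucl n, 1 < ‖c‖ ∧ ∀ x ∈ uBall n, φ x = A (invI c x) := by
  obtain ⟨⟨U, -, hU, g, hg, hgφ⟩, hbij⟩ := hφ
  have hBU : ∀ x ∈ uBall n, x ∈ U := fun x hx => hU (ball_subset_closedBall hx)
  rcases MobForm.of_isMobiusHat hg with ⟨b, s, A, hs, h1, -⟩ | ⟨b, c, s, A, hs, h1, h2, -⟩
  · have hform : ∀ x ∈ uBall n, φ x = b + s • A x := fun x hx =>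
      OnePoint.coe_injective ((hgφ x (hBU x hx)).symm.trans (h1 x))
    obtain ⟨rfl, rfl⟩ := similarity_ball hn hs A (hbij.congr hform)
    exact ⟨A, Or.inl fun x hx => by rw [hform x hx, zero_add, one_smul]⟩
  · have hcU : c ∉ U := fun h => by
      have := (hgφ c h).symm.trans h2
      exact OnePoint.coe_ne_infty _ this
    have hc : 1 < ‖c‖ := by
      by_contra h
      exact hcU (hU (mem_closedBall_zero_iff.2 (not_lt.1 h)))
    have hρ : 0 < ‖c‖ ^ 2 - 1 := rho_pos hc
    have hform : ∀ x ∈ uBall n, φ x = (b - (s / (‖c‖ ^ 2 - 1)) • A c)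
        + (s / (‖c‖ ^ 2 - 1)) • A (invI c x) := fun x hx => by
      have hxc : x ≠ c := ne_of_norm_le hc (mem_uBall.1 hx).le
      have h3 := OnePoint.coe_injective ((hgφ x (hBU x hx)).symm.trans (h1 x hxc))
      have hpos := sub_norm_pos hxc
      rw [h3, invI, map_add, map_smul, smul_add, smul_smul]
      have : s / (‖c‖ ^ 2 - 1) * invK c x = s / ‖x - c‖ ^ 2 := by
        rw [invK]; field_simp
      rw [this]
      abel
    have hinv : BijOn (invI c) (uBall n) (uBall n) := by
      have hm : MapsTo (invI c) (uBall n) (uBall n) := fun x hx =>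
        mem_uBall.2 (norm_invI_lt hc (mem_uBall.1 hx))
      have hi : ∀ x ∈ uBall n, invI c (invI c x) = x := fun x hx =>
        invI_invI hc (ne_of_norm_le hc (mem_uBall.1 hx).le)
      exact InvOn.bijOn ⟨hi, hi⟩ hm hm
    have hb2 := (hbij.comp hinv).congr (f₂ := fun x => (b - (s / (‖c‖ ^ 2 - 1)) • A c)
        + (s / (‖c‖ ^ 2 - 1)) • A x) fun x hx => by
      rw [Function.comp_apply, hform _ (hinv.mapsTo hx),
        invI_invI hc (ne_of_norm_le hc (mem_uBall.1 hx).le)]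
    obtain ⟨e1, e2⟩ := similarity_ball hn (div_pos hs hρ) A hb2
    exact ⟨A, Or.inr ⟨c, hc, fun x hx => by rw [hform x hx, e1, e2, zero_add, one_smul]⟩⟩

lemma abs_det_isometry (A : Eucl n ≃ₗᵢ[ℝ] Eucl n) :
    |LinearMap.det (A.toLinearEquiv : Eucl n →ₗ[ℝ] Eucl n)| = 1 := by
  rw [← LinearMap.normDet_eq_abs_det]
  exact A.toLinearIsometry.normDet_eq_one

lemma normDeriv_eq (hn : 1 ≤ n) {φ : Eucl n → Eucl n} {x : Eucl n} {k : ℝ} (hk : 0 < k)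
    (A : Eucl n ≃ₗᵢ[ℝ] Eucl n) (h : HasFDerivAt φ (k • (A : Eucl n →L[ℝ] Eucl n)) x) :
    normDeriv φ x = k := by
  have hM : jacMatrix φ x = LinearMap.toMatrix (EuclideanSpace.basisFun (Fin n) ℝ).toBasis
      (EuclideanSpace.basisFun (Fin n) ℝ).toBasis
      (k • (A.toLinearEquiv : Eucl n →ₗ[ℝ] Eucl n)) := by
    ext i j
    rw [jacMatrix, h.fderiv, LinearMap.toMatrix_apply]
    simp [basisV]
  rw [normDeriv, hM, LinearMap.det_toMatrix, LinearMap.det_smul, abs_mul, abs_det_isometry,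
    finrank_euclideanSpace_fin, mul_one, abs_of_pos (by positivity),
    Real.pow_rpow_inv_natCast hk.le (by omega)]

end mobiusBall

/-! ### The operator norm -/

/-- Theorem 1.2: For `n ≥ 2`, `1 ≤ p ≤ ∞`, `φ ∈ Möb(B)` and
`ψ = |Dφ|^{(n−2)/2}`, the operator norm of `W_{φ,ψ}` on `h^p(B)` equals
`((1+|φ(0)|)/(1−|φ(0)|))^{|(n−1)/p − (n−2)/2|}` (with `1/p = 0` for `p = ∞`). -/
theorem opNorm_wco_mobius (n : ℕ) (hn : 2 ≤ n) (p : ℝ≥0∞) (hp : 1 ≤ p)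
    (φ : Eucl n → Eucl n) (hφ : IsMobiusBall n φ)
    (ψ : Eucl n → ℂ)
    (hψ : ∀ x ∈ uBall n, ψ x = (↑(normDeriv φ x ^ (((n : ℝ) - 2) / 2)) : ℂ)) :
    (∀ f, MemHp n p f → MemHp n p (wco φ ψ f)) ∧
    (∃ C : ℝ, ∀ f, MemHp n p f → hpNorm n p (wco φ ψ f) ≤ C * hpNorm n p f) ∧
    opNormHp n p (wco φ ψ) =
      ((1 + ‖φ 0‖) / (1 - ‖φ 0‖)) ^
        |((n : ℝ) - 1) * (p⁻¹).toReal - ((n : ℝ) - 2) / 2| := by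
  have hn1 : 1 ≤ n := by omega
  obtain ⟨A, hA | ⟨c, hc, hA⟩⟩ := hφ.exists_form hn
  · have hD : ∀ x ∈ uBall n, normDeriv φ x = 1 := fun x hx => by
      refine normDeriv_eq hn1 one_pos A ?_
      rw [one_smul]
      have h1 : HasFDerivAt (fun y => A y) (A : Eucl n →L[ℝ] Eucl n) x :=
        (A : Eucl n →L[ℝ] Eucl n).hasFDerivAt
      exact h1.congr_of_eventuallyEq
        (Filter.eventually_of_mem ((isOpen_uBall n).mem_nhds hx) hA)
    have hT : ∀ f, ∀ x ∈ uBall n, wco φ ψ f x = f (A x) := fun f x hx => by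
      simp [wco, hψ x hx, hD x hx, hA x hx]
    have hN : ∀ f, hpNorm n p (wco φ ψ f) = hpNorm n p f := fun f => by
      rw [hpNorm_congr (hT f), hpNorm_rot]
    have h0 : φ 0 = 0 := by rw [hA 0 (by simp [uBall]), map_zero]
    refine ⟨fun f hf => (hf.rot A).congr (hT f), ⟨1, fun f _ => by rw [hN, one_mul]⟩, ?_⟩
    rw [h0, norm_zero, add_zero, sub_zero, div_one, Real.one_rpow]
    refine opNorm_eq zero_le_one (fun f _ => by rw [hN, one_mul]) fun C _ hC => ?_
    obtain ⟨m1, e1⟩ := hpNorm_one (n := n) (p := p) hn1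
    have := hC _ m1
    rwa [hN, e1, mul_one] at this
  · have hb : 0 < invB c := by linarith [invB_gt hc]
    have hD : ∀ x ∈ uBall n, normDeriv φ x = invK c x := fun x hx => by
      have hxc : x ≠ c := ne_of_norm_le hc (mem_uBall.1 hx).le
      refine normDeriv_eq hn1 (invK_pos hc hxc) (((ℝ ∙ (x - c))ᗮ.reflection).trans A) ?_
      have h1 : HasFDerivAt (fun y => A (invI c y)) ((A : Eucl n →L[ℝ] Eucl n).comp
          (invK c x • ((ℝ ∙ (x - c))ᗮ.reflection : Eucl n →L[ℝ] Eucl n))) x :=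
        (A : Eucl n →L[ℝ] Eucl n).hasFDerivAt.comp x (hasFDerivAt_invI hc hxc)
      rw [ContinuousLinearMap.comp_smul] at h1
      exact h1.congr_of_eventuallyEq
        (Filter.eventually_of_mem ((isOpen_uBall n).mem_nhds hx) hA)
    have hT : ∀ f, ∀ x ∈ uBall n, wco φ ψ f x = kelvin c (fun y => f (A y)) x := fun f x hx => by
      rw [wco, hψ x hx, hD x hx, hA x hx, kelvin, Complex.real_smul]
    have hM : ∀ f, MemHp n p f → MemHp n p (wco φ ψ f) ∧ hpNorm n p (wco φ ψ f) ≤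
        invB c ^ |((n : ℝ) - 1) * (p⁻¹).toReal - ((n : ℝ) - 2) / 2| * hpNorm n p f :=
      fun f hf => by
        obtain ⟨m1, e1⟩ := (hf.rot A).kelvin hn hc hp
        rw [hpNorm_congr (hT f), ← hpNorm_rot f A]
        exact ⟨m1.congr (hT f), e1⟩
    have h0 : (1 + ‖φ 0‖) / (1 - ‖φ 0‖) = invB c := by
      have hc0 : ‖c‖ ≠ 0 := by linarith
      have hc1 : ‖c‖ - 1 ≠ 0 := by linarith
      have : ‖φ 0‖ = ‖c‖⁻¹ := by
        have e : invI c 0 = (‖c‖ ^ 2)⁻¹ • c := by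
          rw [invI, invK, zero_sub, norm_neg]
          match_scalars
          field_simp
          ring
        rw [hA 0 (by simp [uBall]), A.norm_map, e, norm_smul, norm_inv, norm_pow, norm_norm]
        field_simp
      rw [this, invB]
      have h2 : 1 - ‖c‖⁻¹ ≠ 0 := by
        rw [sub_ne_zero]; intro h
        rw [eq_comm, inv_eq_one] at h
        exact hc1 (by linarith)
      field_simp
    refine ⟨fun f hf => (hM f hf).1, ⟨_, fun f hf => (hM f hf).2⟩, ?_⟩
    rw [h0]
    refine opNorm_eq (Real.rpow_nonneg hb.le _) (fun f hf => (hM f hf).2) fun C hC0 hC =>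
      kelvin_lower hn hc hp hC0 fun f hf => ?_
    have h1 := hC _ (hf.rot A.symm)
    rw [hpNorm_congr (hT _), hpNorm_rot] at h1
    simpa only [A.symm_apply_apply] using h1
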